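/- arXiv:2011.01702 — 2 statements merged into one kernel-verified Lean document; each statement's English description precedes it below -/
import Mathlib

section
/- Let K be a field and T a K-linear triangulated category with a full strong exceptional sequence ⟨E₁, E₂⟩ such that dim_K Hom(E₁, E₂) < ∞. For i = 1, 2 let T_i be the full subcategory of objects isomorphic to finite direct sums ⊕_ℓ E_i^{⊕b_ℓ}[ℓ], and let A_i be the full subcategory of objects isomorphic to E_i^{⊕b} for b ≥ 0. Then: T = ⟨T₁, T₂⟩ is a semiorthogonal decomposition; T_i^{≤0} := { ⊕_{ℓ≥0} E_i^{⊕b_ℓ}[ℓ] } is a bounded t-structure on T_i with heart A_i; these two t-structures are compatible in T; and the glued subcategory A := A₂ * (A₁[1]) is the heart of a bounded t-structure on T with dim_T A ≤ 1. -/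
open CategoryTheory Category Limits Pretriangulated
namespace Paper


universe v u

variable {C : Type u} [Category.{v} C] [HasZeroObject C] [Preadditive C]
  [HasShift C ℤ] [∀ n : ℤ, (shiftFunctor C n).Additive] [Pretriangulated C]

/-- The right orthogonal of a set of objects: objects receiving only zero maps. -/
def rOrth (S : Set C) : Set C := {Y | ∀ X ∈ S, ∀ f : X ⟶ Y, f = 0}

/-- Shift of a set of objects by `n` (closed under isomorphism). -/
def shSet (S : Set C) (n : ℤ) : Set C := {Y | ∃ X ∈ S, Nonempty (Y ≅ X⟦n⟧)}

/-- The `*` operation on sets of objects of a triangulated category. -/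
def star (X Y : Set C) : Set C :=
  {Z | ∃ (A : C) (_ : A ∈ X) (B : C) (_ : B ∈ Y) (f : A ⟶ Z) (g : Z ⟶ B)
    (h : B ⟶ A⟦(1 : ℤ)⟧), Triangle.mk f g h ∈ distTriang C}

/-- A strictly full triangulated subcategory, encoded as a set of objects. -/
structure IsTriangulatedSub (S : Set C) : Prop where
  zero : ∀ X : C, IsZero X → X ∈ S
  isoClosed : ∀ {X Y : C}, (X ≅ Y) → X ∈ S → Y ∈ S
  shift : ∀ (n : ℤ), ∀ X ∈ S, X⟦n⟧ ∈ S
  ext₂ : ∀ T ∈ distTriang C, T.obj₁ ∈ S → T.obj₃ ∈ S → T.obj₂ ∈ S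

/-- A t-structure on the full triangulated subcategory `S ⊆ C`, given by its aisle
`le` (playing the role of `S^{≤ 0}`).  The coaisle `S^{≥ 1}` is `S ∩ rOrth le`. -/
structure IsTStructureOn (S le : Set C) : Prop where
  subset : le ⊆ S
  isoClosed : ∀ {X Y : C}, (X ≅ Y) → X ∈ le → Y ∈ le
  shift : ∀ X ∈ le, X⟦(1 : ℤ)⟧ ∈ le
  exists_triangle : ∀ E ∈ S, ∃ (A B : C) (_ : A ∈ le) (_ : B ∈ S ∩ rOrth le)
    (f : A ⟶ E) (g : E ⟶ B) (h : B ⟶ A⟦(1 : ℤ)⟧), Triangle.mk f g h ∈ distTriang C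

/-- `S^{≤ i} := S^{≤ 0}[-i]`. -/
def leN (le : Set C) (i : ℤ) : Set C := shSet le (-i)

/-- `S^{≥ j} := S^{≥ 1}[-j+1]`. -/
def geN (S le : Set C) (j : ℤ) : Set C := shSet (S ∩ rOrth le) (1 - j)

/-- The heart `S^{≤ 0} ∩ S^{≥ 0}` of a t-structure on `S`. -/
def heartOn (S le : Set C) : Set C := leN le 0 ∩ geN S le 0

/-- Boundedness of a t-structure on `S`. -/
def IsBoundedOn (S le : Set C) : Prop := ∀ E ∈ S, ∃ i j : ℤ, E ∈ leN le i ∧ E ∈ geN S le j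

/-- Non-degeneracy of a t-structure on `S`. -/
def IsNonDegenerateOn (S le : Set C) : Prop :=
  (∀ E : C, (∀ i : ℤ, E ∈ leN le i) → IsZero E) ∧
  (∀ E : C, (∀ j : ℤ, E ∈ geN S le j) → IsZero E)

/-- A semiorthogonal decomposition `C = ⟨S₁, S₂⟩`. -/
structure IsSOD (S₁ S₂ : Set C) : Prop where
  sub₁ : IsTriangulatedSub S₁
  sub₂ : IsTriangulatedSub S₂
  orth : ∀ X ∈ S₂, ∀ Y ∈ S₁, ∀ f : X ⟶ Y, f = 0
  exists_triangle : ∀ E : C, ∃ (A B : C) (_ : A ∈ S₂) (_ : B ∈ S₁)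
    (f : A ⟶ E) (g : E ⟶ B) (h : B ⟶ A⟦(1 : ℤ)⟧), Triangle.mk f g h ∈ distTriang C

/-- Compatibility of t-structures `le₁` on `S₁` and `le₂` on `S₂` in `C`:
`Hom(S₁^{≤0}, S₂^{≥1}) = 0`. -/
def Compatible (S₂ le₁ le₂ : Set C) : Prop :=
  ∀ X ∈ le₁, ∀ Y ∈ S₂ ∩ rOrth le₂, ∀ f : X ⟶ Y, f = 0

/-- The glued aisle `T^{≤0} := T₂^{≤0} * (T₁^{≤0}[1])`. -/
def glued (le₁ le₂ : Set C) : Set C := star le₂ (shSet le₁ 1)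

variable [HasFiniteBiproducts C]

/-- An exceptional object in a `K`-linear triangulated category:
`Hom(E, E) ≅ K` and `Hom(E, E[n]) = 0` for `n ≠ 0`. -/
def IsExceptional (K : Type*) [Field K] [Linear K C] (E : C) : Prop :=
  (¬ IsZero E) ∧ (∀ f : E ⟶ E, ∃ a : K, f = a • 𝟙 E) ∧
  (∀ n : ℤ, n ≠ 0 → ∀ f : E ⟶ E⟦n⟧, f = 0)

/-- The objects isomorphic to finite direct sums of shifts `⊕_ℓ E^{b_ℓ}[ℓ]` of `E`. -/
def sumShifts (E : C) : Set C :=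
  {X | ∃ (m : ℕ) (k : Fin m → ℤ), Nonempty (X ≅ ⨁ (fun j => E⟦k j⟧))}

/-- The objects isomorphic to finite direct sums `⊕_{ℓ ≥ 0} E^{b_ℓ}[ℓ]` of non-negative
shifts of `E`. -/
def sumShiftsNonneg (E : C) : Set C :=
  {X | ∃ (m : ℕ) (k : Fin m → ℤ), (∀ j, 0 ≤ k j) ∧ Nonempty (X ≅ ⨁ (fun j => E⟦k j⟧))}

/-- The objects isomorphic to finite direct sums `E^{⊕ b}` of copies of `E`. -/
def sumCopies (E : C) : Set C :=
  {X | ∃ b : ℕ, Nonempty (X ≅ ⨁ (fun _ : Fin b => E))}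

/-!
An extension `X → Y → Z` with truncation triangles `A₁ → X → B₁` and `A₃ → Z → B₃` such that
`Hom(A₃, B₁[1]) = 0` can be truncated as well: `A₃ → Z → X[1]` lifts to `A₁[1]`, and its fiber is an
extension `A` of `A₃` by `A₁` mapping to `Y`. Without the octahedral axiom the cone of `A → Y` is
not known to be an extension of `B₃` by `B₁`, but a four lemma chase shows that an object without
maps to `B₁` and `B₃` has no maps to this cone, which is the orthogonality a truncation needs.
Applied to the triangle of a semiorthogonal decomposition, with compatibility supplying the
vanishing, this glues the t-structures of the components.

For a single exceptional object every map between two of its shifts is zero or invertible, so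
Gaussian elimination reduces the cone of a map between finite sums of shifts to a direct sum. Such
sums therefore form a triangulated subcategory, and sorting the summands by degree truncates them.
-/

section ZeroMorphisms

variable {D : Type*} [Category* D]

lemma hom_eq_zero_of_iso [HasZeroMorphisms D] {X X' Y Y' : D} (e : X ≅ X') (e' : Y ≅ Y')
    (h : ∀ f : X ⟶ Y, f = 0) (f : X' ⟶ Y') : f = 0 := by
  rw [← cancel_epi e.hom, ← cancel_mono e'.inv, comp_zero, zero_comp]
  exact h _

variable [Preadditive D]

open Preadditive in
lemma rightComp_comp_comm (W : D) {X Y Y' Z : D} {f : X ⟶ Y} {g : Y ⟶ Z} {f' : X ⟶ Y'}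
    {g' : Y' ⟶ Z} (h : f ≫ g = f' ≫ g') :
    (rightComp W g).comp (rightComp W f) = (rightComp W g').comp (rightComp W f') :=
  AddMonoidHom.ext fun x ↦ by
    change (x ≫ f) ≫ g = (x ≫ f') ≫ g'
    rw [assoc, assoc, h]

open Preadditive in
lemma leftComp_comp_comm (W : D) {X Y Y' Z : D} {f : X ⟶ Y} {g : Y ⟶ Z} {f' : X ⟶ Y'}
    {g' : Y' ⟶ Z} (h : f ≫ g = f' ≫ g') :
    (leftComp W f).comp (leftComp W g) = (leftComp W f').comp (leftComp W g') :=
  AddMonoidHom.ext fun x ↦ by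
    change f ≫ g ≫ x = f' ≫ g' ≫ x
    rw [← assoc, h, assoc]

lemma rOrth_iso {le : Set D} {X Y : D} (e : X ≅ Y) (hX : X ∈ rOrth le) : Y ∈ rOrth le :=
  fun W hW ↦ hom_eq_zero_of_iso (Iso.refl W) e (hX W hW)

variable [HasShift D ℤ] [∀ n : ℤ, (shiftFunctor D n).Additive]

lemma hom_shift_eq_zero {X Y : D} (n : ℤ) (h : ∀ f : X ⟶ Y, f = 0) (f : X⟦n⟧ ⟶ Y⟦n⟧) : f = 0 := by
  rw [← (shiftFunctor D n).map_preimage f, h ((shiftFunctor D n).preimage f), Functor.map_zero]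

lemma hom_shift_eq_zero_of_add_eq_zero {X Y : D} {m n : ℤ} (hmn : m + n = 0)
    (h : ∀ f : X ⟶ Y⟦n⟧, f = 0) (f : X⟦m⟧ ⟶ Y) : f = 0 :=
  (shiftFunctor D n).map_injective <| by
    rw [Functor.map_zero]
    exact hom_eq_zero_of_iso ((shiftFunctorCompIsoId D m n hmn).symm.app X) (Iso.refl _) h _

lemma hom_shift_shift_eq_zero {E F : D} {k l n : ℤ} (hn : n + k = l) (h : ∀ f : E ⟶ F⟦n⟧, f = 0)
    (f : E⟦k⟧ ⟶ F⟦l⟧) : f = 0 :=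
  hom_eq_zero_of_iso (Iso.refl _) ((shiftFunctorAdd' D n k l hn).symm.app F)
    (hom_shift_eq_zero k h) f

end ZeroMorphisms

section ShiftSet

variable {D : Type*} [Category* D] [HasShift D ℤ] {S S' : Set D}

lemma shSet_mono (h : S ⊆ S') (n : ℤ) : shSet S n ⊆ shSet S' n :=
  fun _ ⟨Z, hZ, e⟩ ↦ ⟨Z, h hZ, e⟩

lemma shift_mem_shSet_of_mem {X : D} (n : ℤ) (hX : X ∈ S) : X⟦n⟧ ∈ shSet S n :=
  ⟨X, hX, ⟨Iso.refl _⟩⟩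

lemma shift_mem_shSet {X : D} (n : ℤ) {m : ℤ} (h : ∀ X ∈ S, X⟦n⟧ ∈ S') (hX : X ∈ shSet S m) :
    X⟦n⟧ ∈ shSet S' m := by
  obtain ⟨Z, hZ, ⟨e⟩⟩ := hX
  exact ⟨Z⟦n⟧, h Z hZ, ⟨(shiftFunctor D n).mapIso e ≪≫ shiftComm Z m n⟩⟩

lemma shift_mem_shSet_of_add_eq {X : D} {a b c : ℤ} (h : a + b = c) (hX : X⟦a⟧ ∈ S) :
    X⟦c⟧ ∈ shSet S b :=
  ⟨_, hX, ⟨(shiftFunctorAdd' D a b c h).app X⟩⟩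

lemma mem_shSet_iff (hS : ∀ {X Y : D}, (X ≅ Y) → X ∈ S → Y ∈ S) {m n : ℤ} (h : m + n = 0)
    {X : D} : X ∈ shSet S m ↔ X⟦n⟧ ∈ S := by
  refine ⟨fun ⟨Z, hZ, ⟨e⟩⟩ ↦ hS ?_ hZ, fun hX ↦ ⟨_, hX, ⟨?_⟩⟩⟩
  · exact ((shiftFunctor D n).mapIso e ≪≫ (shiftFunctorCompIsoId D m n h).app Z).symm
  · exact ((shiftFunctorCompIsoId D n m (by lia)).app X).symm

end ShiftSet

section Pretriangulated

omit [HasFiniteBiproducts C]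

open scoped ZeroObject

/-! ### Cones of morphisms of triangles -/

section FourLemma

open Preadditive

lemma exact_rightComp {T : Triangle C} (hT : T ∈ distTriang C) (W : C) :
    Function.Exact (rightComp W T.mor₁) (rightComp W T.mor₂) := fun x ↦ by
  refine ⟨fun hx ↦ ?_, ?_⟩
  · obtain ⟨y, rfl⟩ := T.coyoneda_exact₂ hT x hx
    exact ⟨y, rfl⟩
  · rintro ⟨y, rfl⟩
    simp [rightComp, comp_distTriang_mor_zero₁₂ T hT]

lemma exact_leftComp {T : Triangle C} (hT : T ∈ distTriang C) (W : C) :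
    Function.Exact (leftComp W T.mor₂) (leftComp W T.mor₁) := fun x ↦ by
  refine ⟨fun hx ↦ ?_, ?_⟩
  · obtain ⟨y, rfl⟩ := T.yoneda_exact₂ hT x hx
    exact ⟨y, rfl⟩
  · rintro ⟨y, rfl⟩
    simp [leftComp, comp_distTriang_mor_zero₁₂_assoc T hT]

lemma forall_hom_obj₃_eq_zero_iff {T : Triangle C} (hT : T ∈ distTriang C) (W : C) :
    (∀ f : W ⟶ T.obj₃, f = 0) ↔ Function.Surjective (rightComp W T.mor₁) ∧
      Function.Injective (rightComp W (T.mor₁⟦(1 : ℤ)⟧')) := by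
  rw [injective_iff_map_eq_zero]
  refine ⟨fun h ↦ ⟨fun y ↦ (exact_rightComp hT W y).1 (h _), fun x hx ↦ ?_⟩, fun ⟨hs, hi⟩ f ↦ ?_⟩
  · obtain ⟨z, rfl⟩ := T.coyoneda_exact₁ hT x hx
    rw [h z, zero_comp]
  · have hf : f ≫ T.mor₃ = 0 := hi _ (by
      simp [rightComp, comp_distTriang_mor_zero₃₁ T hT])
    obtain ⟨y, rfl⟩ := T.coyoneda_exact₃ hT f hf
    exact (exact_rightComp hT W y).2 (hs y)

lemma forall_hom_from_obj₃_eq_zero_iff {T : Triangle C} (hT : T ∈ distTriang C) (W : C) :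
    (∀ f : T.obj₃ ⟶ W, f = 0) ↔ Function.Injective (leftComp W T.mor₁) ∧
      Function.Surjective (leftComp W (T.mor₁⟦(1 : ℤ)⟧')) := by
  have hT' := rot_of_distTriang _ (rot_of_distTriang _ hT)
  rw [injective_iff_map_eq_zero]
  refine ⟨fun h ↦ ⟨fun y hy ↦ ?_, fun x ↦ ?_⟩, fun ⟨hi, hs⟩ f ↦ ?_⟩
  · obtain ⟨z, rfl⟩ := T.yoneda_exact₂ hT y hy
    rw [h z, comp_zero]
  · obtain ⟨y, rfl⟩ := Triangle.yoneda_exact₂ _ hT' x (h _)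
    exact ⟨-y, (comp_neg _ _).trans (neg_comp _ _).symm⟩
  · have hf : T.mor₂ ≫ f = 0 := hi _ (by
      simp [leftComp, comp_distTriang_mor_zero₁₂_assoc T hT])
    obtain ⟨y, rfl⟩ := T.yoneda_exact₃ hT f hf
    obtain ⟨z, rfl⟩ := hs y
    simp [leftComp, reassoc_of% comp_distTriang_mor_zero₃₁ T hT]

variable {T T' : Triangle C} {D₁ D₂ D₃ : C}
  {p₁ : T'.obj₁ ⟶ D₁} {q₁ : D₁ ⟶ T.obj₁⟦(1 : ℤ)⟧}
  {p₂ : T'.obj₂ ⟶ D₂} {q₂ : D₂ ⟶ T.obj₂⟦(1 : ℤ)⟧}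
  {p₃ : T'.obj₃ ⟶ D₃} {q₃ : D₃ ⟶ T.obj₃⟦(1 : ℤ)⟧}

lemma forall_hom_cone_eq_zero (hT : T ∈ distTriang C) (hT' : T' ∈ distTriang C) (φ : T ⟶ T')
    (h₁ : Triangle.mk φ.hom₁ p₁ q₁ ∈ distTriang C) (h₂ : Triangle.mk φ.hom₂ p₂ q₂ ∈ distTriang C)
    (h₃ : Triangle.mk φ.hom₃ p₃ q₃ ∈ distTriang C) {W : C} (hD₁ : ∀ f : W ⟶ D₁, f = 0)
    (hD₃ : ∀ f : W ⟶ D₃, f = 0) (f : W ⟶ D₂) : f = 0 := by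
  obtain ⟨s₁, i₁⟩ := (forall_hom_obj₃_eq_zero_iff h₁ W).1 hD₁
  obtain ⟨s₃, i₃⟩ := (forall_hom_obj₃_eq_zero_iff h₃ W).1 hD₃
  have hR := rot_of_distTriang _ hT
  have hRR := rot_of_distTriang _ hR
  have hR' := rot_of_distTriang _ hT'
  have hRR' := rot_of_distTriang _ hR'
  let ψ := (rotate C).map ((rotate C).map φ)
  refine (forall_hom_obj₃_eq_zero_iff h₂ W).2 ⟨?_, ?_⟩ f
  · exact AddMonoidHom.surjective_of_surjective_of_surjective_of_injective _ _ _ _ _ _ _ _ _ _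
      (rightComp_comp_comm W φ.comm₁.symm) (rightComp_comp_comm W φ.comm₂.symm)
      (rightComp_comp_comm W φ.comm₃.symm)
      (exact_rightComp hR W) (exact_rightComp hT' W) (exact_rightComp hR' W) s₁ s₃ i₁
  · exact AddMonoidHom.injective_of_surjective_of_injective_of_injective _ _ _ _ _ _ _ _ _ _
      (rightComp_comp_comm W φ.comm₃.symm) (rightComp_comp_comm W ψ.comm₂.symm)
      (rightComp_comp_comm W ψ.comm₃.symm) (exact_rightComp hRR W)
      (exact_rightComp (rot_of_distTriang _ hRR) W) (exact_rightComp hRR' W) s₃ i₁ i₃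

lemma forall_hom_from_cone_eq_zero (hT : T ∈ distTriang C) (hT' : T' ∈ distTriang C) (φ : T ⟶ T')
    (h₁ : Triangle.mk φ.hom₁ p₁ q₁ ∈ distTriang C) (h₂ : Triangle.mk φ.hom₂ p₂ q₂ ∈ distTriang C)
    (h₃ : Triangle.mk φ.hom₃ p₃ q₃ ∈ distTriang C) {W : C} (hD₁ : ∀ f : D₁ ⟶ W, f = 0)
    (hD₃ : ∀ f : D₃ ⟶ W, f = 0) (f : D₂ ⟶ W) : f = 0 := by
  obtain ⟨i₁, s₁⟩ := (forall_hom_from_obj₃_eq_zero_iff h₁ W).1 hD₁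
  obtain ⟨i₃, s₃⟩ := (forall_hom_from_obj₃_eq_zero_iff h₃ W).1 hD₃
  have hR := rot_of_distTriang _ hT
  have hRR := rot_of_distTriang _ hR
  have hR' := rot_of_distTriang _ hT'
  have hRR' := rot_of_distTriang _ hR'
  let ψ := (rotate C).map ((rotate C).map φ)
  refine (forall_hom_from_obj₃_eq_zero_iff h₂ W).2 ⟨?_, ?_⟩ f
  · exact AddMonoidHom.injective_of_surjective_of_injective_of_injective _ _ _ _ _ _ _ _ _ _
      (leftComp_comp_comm W φ.comm₃) (leftComp_comp_comm W φ.comm₂)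
      (leftComp_comp_comm W φ.comm₁) (exact_leftComp hR' W) (exact_leftComp hT' W)
      (exact_leftComp hR W) s₁ i₃ i₁
  · exact AddMonoidHom.surjective_of_surjective_of_surjective_of_injective _ _ _ _ _ _ _ _ _ _
      (leftComp_comp_comm W ψ.comm₃) (leftComp_comp_comm W ψ.comm₂)
      (leftComp_comp_comm W φ.comm₃) (exact_leftComp hRR' W)
      (exact_leftComp (rot_of_distTriang _ hRR) W) (exact_leftComp hRR W) s₃ s₁ i₃

end FourLemma

lemma obj₃_hom_ext {T : Triangle C} (hT : T ∈ distTriang C) {W : C}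
    (hW : ∀ u : T.obj₁⟦(1 : ℤ)⟧ ⟶ W, u = 0) {x y : T.obj₃ ⟶ W}
    (hxy : T.mor₂ ≫ x = T.mor₂ ≫ y) : x = y := by
  obtain ⟨u, hu⟩ := T.yoneda_exact₃ hT (x - y) (by rw [Preadditive.comp_sub, hxy, sub_self])
  rw [← sub_eq_zero, hu, hW u, comp_zero]

lemma nonempty_iso_of_distTriang {A F Y D B : C} {f : A ⟶ Y} {g : Y ⟶ D} {h : D ⟶ A⟦(1 : ℤ)⟧}
    (hT : Triangle.mk f g h ∈ distTriang C) {f' : F ⟶ Y} {g' : Y ⟶ B} {h' : B ⟶ F⟦(1 : ℤ)⟧}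
    (hT' : Triangle.mk f' g' h' ∈ distTriang C) (hAB : ∀ u : A ⟶ B, u = 0)
    (hAD : ∀ u : A⟦(1 : ℤ)⟧ ⟶ D, u = 0) (hFD : ∀ u : F ⟶ D, u = 0)
    (hFB : ∀ u : F⟦(1 : ℤ)⟧ ⟶ B, u = 0) : Nonempty (D ≅ B) := by
  obtain ⟨a, ha⟩ : ∃ a : D ⟶ B, g' = g ≫ a := Triangle.yoneda_exact₂ _ hT g' (hAB _)
  obtain ⟨b, hb⟩ : ∃ b : B ⟶ D, g = g' ≫ b := Triangle.yoneda_exact₂ _ hT' g (hFD _)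
  refine ⟨a, b, obj₃_hom_ext hT hAD ?_, obj₃_hom_ext hT' hFB ?_⟩
  · change g ≫ a ≫ b = g ≫ 𝟙 D
    rw [← assoc, ← ha, ← hb, comp_id]
  · change g' ≫ b ≫ a = g' ≫ 𝟙 B
    rw [← assoc, ← hb, ← ha, comp_id]

/-! ### Extensions -/

section Star

variable {S S' T T' : Set C}

lemma star_iso {X Y : C} (e : X ≅ Y) (hX : X ∈ star S T) : Y ∈ star S T := by
  obtain ⟨A, hA, B, hB, f, g, h, hT⟩ := hX
  refine ⟨A, hA, B, hB, f ≫ e.hom, e.inv ≫ g, h, isomorphic_distinguished _ hT _ ?_⟩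
  exact Triangle.isoMk _ _ (Iso.refl _) e.symm (Iso.refl _)
    (by simp [Triangle.mk]) (by simp [Triangle.mk]) (by simp [Triangle.mk])

lemma star_mono (hS : S ⊆ S') (hT : T ⊆ T') : star S T ⊆ star S' T' :=
  fun _ ⟨A, hA, B, hB, h⟩ ↦ ⟨A, hS hA, B, hT hB, h⟩

lemma shift_mem_star (n : ℤ) (hS : ∀ X ∈ S, X⟦n⟧ ∈ S') (hT : ∀ X ∈ T, X⟦n⟧ ∈ T') {X : C}
    (hX : X ∈ star S T) : X⟦n⟧ ∈ star S' T' := by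
  obtain ⟨A, hA, B, hB, f, g, h, hABX⟩ := hX
  exact ⟨_, hS A hA, _, hT B hB, _, _, _, Triangle.shift_distinguished _ hABX n⟩

lemma subset_star_left (hT : 0 ∈ T) : S ⊆ star S T :=
  fun X hX ↦ ⟨X, hX, 0, hT, 𝟙 X, 0, 0, contractible_distinguished X⟩

lemma subset_star_right (hS : 0 ∈ S) : T ⊆ star S T :=
  fun X hX ↦ ⟨0, hS, X, hX, 0, 𝟙 X, 0, contractible_distinguished₁ X⟩

lemma hom_to_star_eq_zero {W X : C} (hX : X ∈ star S T) (hS : ∀ Y ∈ S, ∀ f : W ⟶ Y, f = 0)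
    (hT : ∀ Y ∈ T, ∀ f : W ⟶ Y, f = 0) (f : W ⟶ X) : f = 0 := by
  obtain ⟨A, hA, B, hB, i, p, q, hABX⟩ := hX
  obtain ⟨u, rfl⟩ : ∃ u : W ⟶ A, f = u ≫ i := Triangle.coyoneda_exact₂ _ hABX f (hT B hB _)
  rw [hS A hA u, zero_comp]

lemma hom_from_star_eq_zero {W X : C} (hX : X ∈ star S T) (hS : ∀ Y ∈ S, ∀ f : Y ⟶ W, f = 0)
    (hT : ∀ Y ∈ T, ∀ f : Y ⟶ W, f = 0) (f : X ⟶ W) : f = 0 := by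
  obtain ⟨A, hA, B, hB, i, p, q, hABX⟩ := hX
  obtain ⟨u, rfl⟩ : ∃ u : B ⟶ W, f = p ≫ u := Triangle.yoneda_exact₂ _ hABX f (hS A hA _)
  rw [hT B hB u, comp_zero]

end Star

section Extension

variable {X Y Z A₁ B₁ A₃ B₃ : C} {s : X ⟶ Y} {t : Y ⟶ Z} {w : Z ⟶ X⟦(1 : ℤ)⟧}
  {f₁ : A₁ ⟶ X} {g₁ : X ⟶ B₁} {h₁ : B₁ ⟶ A₁⟦(1 : ℤ)⟧}
  {f₃ : A₃ ⟶ Z} {g₃ : Z ⟶ B₃} {h₃ : B₃ ⟶ A₃⟦(1 : ℤ)⟧}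

lemma exists_triangle_star_of_hom_cone_eq_zero (hT : Triangle.mk s t w ∈ distTriang C)
    (hT₁ : Triangle.mk f₁ g₁ h₁ ∈ distTriang C) (hT₃ : Triangle.mk f₃ g₃ h₃ ∈ distTriang C)
    (hAB : ∀ f : A₃ ⟶ B₁⟦(1 : ℤ)⟧, f = 0) :
    ∃ (A D : C) (f : A ⟶ Y) (g : Y ⟶ D) (h : D ⟶ A⟦(1 : ℤ)⟧),
      Triangle.mk f g h ∈ distTriang C ∧ A ∈ star {A₁} {A₃} ∧
      ∀ W : C, (∀ f : W ⟶ B₁, f = 0) → (∀ f : W ⟶ B₃, f = 0) → ∀ f : W ⟶ D, f = 0 := by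
  obtain ⟨a, ha⟩ : ∃ a : A₃ ⟶ A₁⟦(1 : ℤ)⟧, f₃ ≫ w = a ≫ f₁⟦(1 : ℤ)⟧' := by
    obtain ⟨a, ha⟩ : ∃ a : A₃ ⟶ A₁⟦(1 : ℤ)⟧, f₃ ≫ w = a ≫ ((1 : ℤ).negOnePow • f₁⟦(1 : ℤ)⟧') :=
      Triangle.coyoneda_exact₂ _ (Triangle.shift_distinguished _ hT₁ 1) _ (hAB _)
    exact ⟨-a, by simpa using ha⟩
  obtain ⟨A, i, p, hA⟩ := distinguished_cocone_triangle₂ a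
  obtain ⟨f, hf₁, hf₃⟩ := complete_distinguished_triangle_morphism₂ _ _ hA hT f₁ f₃ ha.symm
  obtain ⟨D, g, h, hD⟩ := distinguished_cocone_triangle f
  exact ⟨A, D, f, g, h, hD, ⟨A₁, rfl, A₃, rfl, i, p, a, hA⟩, fun W h₁ h₃ ↦
    forall_hom_cone_eq_zero hA hT ⟨f₁, f, f₃, hf₁, hf₃, ha.symm⟩ hT₁ hD hT₃ h₁ h₃⟩

lemma exists_triangle_star_of_hom_fiber_eq_zero (hT : Triangle.mk s t w ∈ distTriang C)
    (hT₁ : Triangle.mk f₁ g₁ h₁ ∈ distTriang C) (hT₃ : Triangle.mk f₃ g₃ h₃ ∈ distTriang C)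
    (hAB : ∀ f : A₃ ⟶ B₁⟦(1 : ℤ)⟧, f = 0) :
    ∃ (F B : C) (f : F ⟶ Y) (g : Y ⟶ B) (h : B ⟶ F⟦(1 : ℤ)⟧),
      Triangle.mk f g h ∈ distTriang C ∧ B ∈ star {B₁} {B₃} ∧
      ∀ W : C, (∀ f : A₁ ⟶ W, f = 0) → (∀ f : A₃ ⟶ W, f = 0) → ∀ f : F ⟶ W, f = 0 := by
  obtain ⟨b, hb⟩ : ∃ b : B₃ ⟶ B₁⟦(1 : ℤ)⟧, w ≫ g₁⟦(1 : ℤ)⟧' = g₃ ≫ b :=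
    Triangle.yoneda_exact₂ _ hT₃ _ (hAB _)
  obtain ⟨B, i, p, hB⟩ := distinguished_cocone_triangle₂ b
  obtain ⟨g, hg₁, hg₃⟩ := complete_distinguished_triangle_morphism₂ _ _ hT hB g₁ g₃ hb
  obtain ⟨F, f, h, hF⟩ := distinguished_cocone_triangle₁ g
  refine ⟨F, B, f, g, h, hF, ⟨B₁, rfl, B₃, rfl, i, p, b, hB⟩, fun W h₁ h₃ u ↦ ?_⟩
  refine (shiftFunctor C (1 : ℤ)).map_injective (Eq.trans ?_ (Functor.map_zero _ _ _).symm)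
  exact forall_hom_from_cone_eq_zero hT hB ⟨g₁, g, g₃, hg₁, hg₃, hb⟩
    (rot_of_distTriang _ hT₁) (rot_of_distTriang _ hF) (rot_of_distTriang _ hT₃)
    (hom_shift_eq_zero 1 h₁) (hom_shift_eq_zero 1 h₃) _

end Extension

lemma IsTriangulatedSub.star_subset {S : Set C} (hS : IsTriangulatedSub S) : star S S ⊆ S := by
  rintro X ⟨A, hA, B, hB, f, g, h, hT⟩
  exact hS.ext₂ _ hT hA hB

lemma isTriangulatedSub_star {S₁ S₂ : Set C} (hS₁ : IsTriangulatedSub S₁)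
    (hS₂ : IsTriangulatedSub S₂) (orth : ∀ X ∈ S₂, ∀ Y ∈ S₁, ∀ f : X ⟶ Y, f = 0) :
    IsTriangulatedSub (star S₂ S₁) where
  zero X hX := subset_star_left (hS₁.zero 0 (isZero_zero C)) (hS₂.zero X hX)
  isoClosed := star_iso
  shift n _ hX := shift_mem_star n (hS₂.shift n) (hS₁.shift n) hX
  ext₂ := by
    rintro T hT ⟨A₁, hA₁, B₁, hB₁, f₁, g₁, h₁, hT₁⟩ ⟨A₃, hA₃, B₃, hB₃, f₃, g₃, h₃, hT₃⟩
    have hAB := orth A₃ hA₃ _ (hS₁.shift 1 B₁ hB₁)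
    obtain ⟨A, D, f, g, h, hfg, hA, hD⟩ :=
      exists_triangle_star_of_hom_cone_eq_zero hT hT₁ hT₃ hAB
    obtain ⟨F, B, f', g', h', hfg', hB, hF⟩ :=
      exists_triangle_star_of_hom_fiber_eq_zero hT hT₁ hT₃ hAB
    replace hA : A ∈ S₂ := hS₂.star_subset (star_mono (by simpa) (by simpa) hA)
    replace hB : B ∈ S₁ := hS₁.star_subset (star_mono (by simpa) (by simpa) hB)
    replace hD : ∀ W ∈ S₂, ∀ u : W ⟶ D, u = 0 :=
      fun W hW ↦ hD W (orth W hW B₁ hB₁) (orth W hW B₃ hB₃)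
    replace hF : ∀ W, (∀ V ∈ S₂, ∀ u : V ⟶ W, u = 0) → ∀ u : F ⟶ W, u = 0 :=
      fun W hW ↦ hF W (hW A₁ hA₁) (hW A₃ hA₃)
    have hFB : ∀ u : F⟦(1 : ℤ)⟧ ⟶ B, u = 0 := hom_shift_eq_zero_of_add_eq_zero (add_neg_cancel 1)
      (hF _ fun V hV ↦ orth V hV _ (hS₁.shift (-1) B hB))
    obtain ⟨e⟩ := nonempty_iso_of_distTriang hfg hfg' (orth A hA B hB)
      (hD _ (hS₂.shift 1 A hA)) (hF D hD) hFB
    exact ⟨A, hA, D, hS₁.isoClosed e.symm hB, f, g, h, hfg⟩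

lemma isTriangulatedSub_univ : IsTriangulatedSub (Set.univ : Set C) where
  zero _ _ := trivial
  isoClosed _ _ := trivial
  shift _ _ _ := trivial
  ext₂ _ _ _ _ := trivial

/-! ### Aisles and hearts -/

section TStructure

variable {S le : Set C}

lemma coaisle_iso (hS : IsTriangulatedSub S) {X Y : C} (e : X ≅ Y) (hX : X ∈ S ∩ rOrth le) :
    Y ∈ S ∩ rOrth le :=
  ⟨hS.isoClosed e hX.1, rOrth_iso e hX.2⟩

lemma mem_shSet_one_coaisle_iff (hS : IsTriangulatedSub S) {X : C} :
    X ∈ shSet (S ∩ rOrth le) 1 ↔ X ∈ S ∧ ∀ W ∈ le, ∀ f : W⟦(1 : ℤ)⟧ ⟶ X, f = 0 := by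
  rw [mem_shSet_iff (coaisle_iso hS) (add_neg_cancel 1)]
  refine ⟨fun ⟨hX, h⟩ ↦ ⟨?_, fun W hW ↦ ?_⟩, fun ⟨hX, h⟩ ↦ ⟨hS.shift _ X hX, fun W hW f ↦ ?_⟩⟩
  · exact hS.isoClosed (shiftNegShift X (1 : ℤ)) (hS.shift 1 _ hX)
  · exact hom_shift_eq_zero_of_add_eq_zero (add_neg_cancel 1) (h W hW)
  · apply (shiftFunctor C (1 : ℤ)).map_injective
    rw [Functor.map_zero]
    exact hom_eq_zero_of_iso (Iso.refl _) (shiftNegShift X (1 : ℤ)).symm (h W hW) _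

namespace IsTStructureOn

lemma shift_mem_of_le (h : IsTStructureOn S le) {X : C} {m n : ℤ} (hmn : m ≤ n)
    (hX : X⟦m⟧ ∈ le) : X⟦n⟧ ∈ le := by
  induction n, hmn using Int.leInduction with
  | base => exact hX
  | succ n _ ih =>
    exact h.isoClosed ((shiftFunctorAdd' C n 1 (n + 1) rfl).symm.app X) (h.shift _ ih)

lemma shift_mem_coaisle_of_le (h : IsTStructureOn S le) (hS : IsTriangulatedSub S) {X : C}
    {m n : ℤ} (hmn : m ≤ n) (hX : X⟦n⟧ ∈ S ∩ rOrth le) : X⟦m⟧ ∈ S ∩ rOrth le := by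
  induction m, hmn using Int.leInductionDown with
  | base => exact hX
  | pred m _ ih =>
    refine coaisle_iso hS ((shiftFunctorAdd' C m (-1) (m - 1) (by lia)).symm.app X) ?_
    exact (mem_shSet_iff (coaisle_iso hS) (add_neg_cancel 1)).1 <|
      (mem_shSet_one_coaisle_iff hS).2 ⟨ih.1, fun W hW ↦ ih.2 _ (h.shift W hW)⟩

lemma isBoundedOn_iff (h : IsTStructureOn S le) (hS : IsTriangulatedSub S) :
    IsBoundedOn S le ↔ ∀ E ∈ S, ∃ N : ℤ,
      ∀ n, N ≤ n → E⟦n⟧ ∈ le ∧ E⟦-n⟧ ∈ S ∩ rOrth le := by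
  refine forall₂_congr fun E _ ↦ ⟨fun ⟨i, j, hi, hj⟩ ↦ ?_, fun ⟨N, hN⟩ ↦ ⟨N, 1 - N, ?_, ?_⟩⟩
  · rw [leN, mem_shSet_iff h.isoClosed (neg_add_cancel i)] at hi
    rw [geN, mem_shSet_iff (coaisle_iso hS) (n := j - 1) (by lia)] at hj
    exact ⟨max i (1 - j), fun n hn ↦
      ⟨h.shift_mem_of_le (by lia) hi, h.shift_mem_coaisle_of_le hS (by lia) hj⟩⟩
  · exact (mem_shSet_iff h.isoClosed (neg_add_cancel N)).2 (hN N le_rfl).1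
  · exact (mem_shSet_iff (coaisle_iso hS) (by lia)).2 (hN N le_rfl).2

lemma heartOn_eq (h : IsTStructureOn S le) :
    heartOn S le = le ∩ shSet (S ∩ rOrth le) 1 := by
  ext X
  refine and_congr ((mem_shSet_iff h.isoClosed (n := 0) rfl).trans ?_) Iff.rfl
  exact ⟨h.isoClosed (shiftZero ℤ X), h.isoClosed (shiftZero ℤ X).symm⟩

lemma zero_mem (h : IsTStructureOn S le) (hS : IsTriangulatedSub S) : 0 ∈ le := by
  obtain ⟨A, B, hA, hB, f, g, δ, hT⟩ := h.exists_triangle 0 (hS.zero 0 (isZero_zero C))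
  have : IsIso δ := (Triangle.isZero₂_iff_isIso₃ _ hT).1 (isZero_zero C)
  have hδ : inv δ = 0 := hB.2 _ (h.shift A hA) _
  have hA' : IsZero (A⟦(1 : ℤ)⟧) := by
    rw [IsZero.iff_id_eq_zero, ← IsIso.inv_hom_id δ, hδ, zero_comp]
  exact h.isoClosed (hA'.iso (isZero_zero C)) (h.shift A hA)

lemma subset_star_shSet (h : IsTStructureOn S le) (hS : IsTriangulatedSub S) (n : ℤ) :
    S ⊆ star (shSet le n) (shSet (S ∩ rOrth le) n) := by
  intro X hX
  obtain ⟨A, B, hA, hB, hAB⟩ := h.exists_triangle _ (hS.shift (-n) X hX)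
  exact star_iso (shiftNegShift X n) <| shift_mem_star n (fun _ ↦ shift_mem_shSet_of_mem n)
    (fun _ ↦ shift_mem_shSet_of_mem n) ⟨A, hA, B, hB, hAB⟩

end IsTStructureOn

end TStructure

/-! ### Gluing -/

section Glued

variable {S₁ S₂ le₁ le₂ : Set C}

lemma coaisle_subset_rOrth_glued (h₁ : IsTStructureOn S₁ le₁) (hc : Compatible S₂ le₁ le₂) :
    S₂ ∩ rOrth le₂ ⊆ rOrth (glued le₁ le₂) := by
  refine fun Y hY W hW ↦ hom_from_star_eq_zero hW (fun A hA ↦ hY.2 A hA) ?_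
  rintro B ⟨Z, hZ, ⟨e⟩⟩
  exact hom_eq_zero_of_iso e.symm (Iso.refl Y) (hc _ (h₁.shift Z hZ) Y hY)

lemma shSet_coaisle_subset_rOrth_glued (hS : IsSOD S₁ S₂) (h₂ : IsTStructureOn S₂ le₂) :
    shSet (S₁ ∩ rOrth le₁) 1 ⊆ rOrth (glued le₁ le₂) := by
  rintro Y ⟨V, hV, ⟨e⟩⟩ W hW
  refine hom_from_star_eq_zero hW (fun A hA ↦ ?_) ?_
  · exact hS.orth A (h₂.subset hA) Y (hS.sub₁.isoClosed e.symm (hS.sub₁.shift 1 V hV.1))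
  · rintro B ⟨Z, hZ, ⟨e'⟩⟩
    exact hom_eq_zero_of_iso e'.symm e.symm (hom_shift_eq_zero 1 (hV.2 Z hZ))

lemma star_coaisle_subset_rOrth_glued (hS : IsSOD S₁ S₂) (h₁ : IsTStructureOn S₁ le₁)
    (h₂ : IsTStructureOn S₂ le₂) (hc : Compatible S₂ le₁ le₂) :
    star (S₂ ∩ rOrth le₂) (shSet (S₁ ∩ rOrth le₁) 1) ⊆ rOrth (glued le₁ le₂) :=
  fun _ hX W hW ↦ hom_to_star_eq_zero hX
    (fun _ hY ↦ coaisle_subset_rOrth_glued h₁ hc hY W hW)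
    (fun _ hY ↦ shSet_coaisle_subset_rOrth_glued hS h₂ hY W hW)

theorem isTStructureOn_univ_glued (hS : IsSOD S₁ S₂) (h₁ : IsTStructureOn S₁ le₁)
    (h₂ : IsTStructureOn S₂ le₂) (hc : Compatible S₂ le₁ le₂) :
    IsTStructureOn Set.univ (glued le₁ le₂) where
  subset := Set.subset_univ _
  isoClosed := star_iso
  shift _ hX := shift_mem_star 1 h₂.shift (fun _ ↦ shift_mem_shSet 1 h₁.shift) hX
  exists_triangle X _ := by
    obtain ⟨X₂, X₁, hX₂, hX₁, _, _, _, hX⟩ := hS.exists_triangle X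
    obtain ⟨A₂, B₂, hA₂, hB₂, _, _, _, hAB₂⟩ := h₂.exists_triangle X₂ hX₂
    obtain ⟨A₁, hA₁, B₁, hB₁, _, _, _, hAB₁⟩ := h₁.subset_star_shSet hS.sub₁ 1 hX₁
    have hA₁B₂ : ∀ u : A₁ ⟶ B₂⟦(1 : ℤ)⟧, u = 0 := by
      obtain ⟨Z, hZ, ⟨e⟩⟩ := hA₁
      exact hom_eq_zero_of_iso e.symm (Iso.refl _) (hom_shift_eq_zero 1 (hc Z hZ B₂ hB₂))
    obtain ⟨A, B, f, g, h, hAB, hA, hB⟩ :=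
      exists_triangle_star_of_hom_cone_eq_zero hX hAB₂ hAB₁ hA₁B₂
    refine ⟨A, B, star_mono (by simpa) (by simpa) hA, ⟨trivial, fun W hW ↦ hB W ?_ ?_⟩,
      f, g, h, hAB⟩
    · exact coaisle_subset_rOrth_glued h₁ hc hB₂ W hW
    · exact shSet_coaisle_subset_rOrth_glued hS h₂ hB₁ W hW

theorem isBoundedOn_univ_glued (hS : IsSOD S₁ S₂) (h₁ : IsTStructureOn S₁ le₁)
    (h₂ : IsTStructureOn S₂ le₂) (hc : Compatible S₂ le₁ le₂) (hb₁ : IsBoundedOn S₁ le₁)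
    (hb₂ : IsBoundedOn S₂ le₂) : IsBoundedOn Set.univ (glued le₁ le₂) := by
  refine ((isTStructureOn_univ_glued hS h₁ h₂ hc).isBoundedOn_iff isTriangulatedSub_univ).2
    fun X _ ↦ ?_
  obtain ⟨X₂, X₁, hX₂, hX₁, f, g, h, hX⟩ := hS.exists_triangle X
  obtain ⟨N₁, hN₁⟩ := (h₁.isBoundedOn_iff hS.sub₁).1 hb₁ X₁ hX₁
  obtain ⟨N₂, hN₂⟩ := (h₂.isBoundedOn_iff hS.sub₂).1 hb₂ X₂ hX₂
  have hX : X ∈ star {X₂} {X₁} := ⟨X₂, rfl, X₁, rfl, f, g, h, hX⟩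
  refine ⟨max N₂ (N₁ + 1), fun n hn ↦ ⟨?_, trivial, ?_⟩⟩
  · refine shift_mem_star n ?_ ?_ hX
    · simpa using (hN₂ n (by lia)).1
    · simpa using shift_mem_shSet_of_add_eq (sub_add_cancel n 1) (hN₁ (n - 1) (by lia)).1
  · refine star_coaisle_subset_rOrth_glued hS h₁ h₂ hc (shift_mem_star (-n) ?_ ?_ hX)
    · simpa using (hN₂ n (by lia)).2
    · simpa using shift_mem_shSet_of_add_eq (by lia) (hN₁ (n + 1) (by lia)).2

lemma left_subset_glued (hS : IsTriangulatedSub S₁) (h₁ : IsTStructureOn S₁ le₁) :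
    le₂ ⊆ glued le₁ le₂ :=
  subset_star_left ((mem_shSet_iff h₁.isoClosed (add_neg_cancel 1)).2
    (h₁.isoClosed (Functor.mapZeroObject _).symm (h₁.zero_mem hS)))

lemma right_subset_glued (hS : IsTriangulatedSub S₂) (h₂ : IsTStructureOn S₂ le₂) :
    shSet le₁ 1 ⊆ glued le₁ le₂ :=
  subset_star_right (h₂.zero_mem hS)

section Components

variable {P X B : C} {f : P ⟶ X} {g : X ⟶ B} {h : B ⟶ P⟦(1 : ℤ)⟧}

lemma left_component_mem_shSet_coaisle (hS : IsSOD S₁ S₂) (h₁ : IsTStructureOn S₁ le₁)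
    (h₂ : IsTStructureOn S₂ le₂) (hT : Triangle.mk f g h ∈ distTriang C) (hP : P ∈ S₂)
    (hB : B ∈ S₁) (hX : ∀ W ∈ glued le₁ le₂, ∀ u : W⟦(1 : ℤ)⟧ ⟶ X, u = 0) :
    P ∈ shSet (S₂ ∩ rOrth le₂) 1 := by
  refine (mem_shSet_one_coaisle_iff hS.sub₂).2 ⟨hP, fun W hW u ↦ ?_⟩
  have huf : u⟦(1 : ℤ)⟧' ≫ f⟦(1 : ℤ)⟧' = 0 := by
    rw [← Functor.map_comp, hX W (left_subset_glued hS.sub₁ h₁ hW) (u ≫ f), Functor.map_zero]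
  obtain ⟨v, hv⟩ : ∃ v : W⟦(1 : ℤ)⟧⟦(1 : ℤ)⟧ ⟶ B, u⟦(1 : ℤ)⟧' = v ≫ h :=
    Triangle.coyoneda_exact₁ _ hT (u⟦(1 : ℤ)⟧') huf
  have hv₀ : v = 0 :=
    hS.orth _ (hS.sub₂.shift 1 _ (hS.sub₂.shift 1 W (h₂.subset hW))) B hB v
  apply (shiftFunctor C (1 : ℤ)).map_injective
  rw [hv, hv₀, zero_comp, Functor.map_zero]

lemma right_component_mem_shSet_coaisle (hS₁ : IsTriangulatedSub S₁)
    (hS₂ : IsTriangulatedSub S₂) (h₂ : IsTStructureOn S₂ le₂) (hc : Compatible S₂ le₁ le₂)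
    (hT : Triangle.mk f g h ∈ distTriang C) (hP : P ∈ shSet (S₂ ∩ rOrth le₂) 1) {Z : C}
    (hZ : Z ∈ S₁) (e : B ≅ Z⟦(1 : ℤ)⟧)
    (hX : ∀ W ∈ glued le₁ le₂, ∀ u : W⟦(1 : ℤ)⟧ ⟶ X, u = 0) :
    Z ∈ shSet (S₁ ∩ rOrth le₁) 1 := by
  refine (mem_shSet_one_coaisle_iff hS₁).2 ⟨hZ, fun W hW u ↦ ?_⟩
  have hWP : ∀ v : W⟦(1 : ℤ)⟧ ⟶ P, v = 0 := by
    obtain ⟨Q, hQ, ⟨e'⟩⟩ := hP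
    exact hom_eq_zero_of_iso (Iso.refl _) e'.symm (hom_shift_eq_zero 1 (hc W hW Q hQ))
  obtain ⟨v, hv⟩ : ∃ v : W⟦(1 : ℤ)⟧⟦(1 : ℤ)⟧ ⟶ X, u⟦(1 : ℤ)⟧' ≫ e.inv = v ≫ g :=
    Triangle.coyoneda_exact₃ _ hT _ (hom_shift_eq_zero 1 hWP _)
  have hv₀ : v = 0 :=
    hX _ (right_subset_glued hS₂ h₂ (shift_mem_shSet_of_mem 1 hW)) v
  apply (shiftFunctor C (1 : ℤ)).map_injective
  rw [← cancel_mono e.inv, hv, hv₀, zero_comp, Functor.map_zero, zero_comp]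

end Components

theorem heartOn_univ_glued (hS : IsSOD S₁ S₂) (h₁ : IsTStructureOn S₁ le₁)
    (h₂ : IsTStructureOn S₂ le₂) (hc : Compatible S₂ le₁ le₂) :
    heartOn Set.univ (glued le₁ le₂) =
      star (heartOn S₂ le₂) (shSet (heartOn S₁ le₁) 1) := by
  rw [(isTStructureOn_univ_glued hS h₁ h₂ hc).heartOn_eq, h₁.heartOn_eq, h₂.heartOn_eq]
  refine Set.Subset.antisymm ?_ fun X hX ↦ ⟨?_, ?_⟩
  · rintro X ⟨⟨P, hP, B, ⟨Z, hZ, ⟨e⟩⟩, f, g, h, hT⟩, hX⟩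
    replace hX := ((mem_shSet_one_coaisle_iff isTriangulatedSub_univ).1 hX).2
    have hB : B ∈ S₁ := hS.sub₁.isoClosed e.symm (hS.sub₁.shift 1 Z (h₁.subset hZ))
    have hP' := left_component_mem_shSet_coaisle hS h₁ h₂ hT (h₂.subset hP) hB hX
    have hZ' := right_component_mem_shSet_coaisle hS.sub₁ hS.sub₂ h₂ hc hT hP' (h₁.subset hZ) e hX
    exact ⟨P, ⟨hP, hP'⟩, B, ⟨Z, ⟨hZ, hZ'⟩, ⟨e⟩⟩, f, g, h, hT⟩
  · exact star_mono Set.inter_subset_left (shSet_mono Set.inter_subset_left 1) hX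
  · refine (mem_shSet_iff (coaisle_iso isTriangulatedSub_univ) (add_neg_cancel 1)).2
      ⟨trivial, star_coaisle_subset_rOrth_glued hS h₁ h₂ hc (shift_mem_star (-1) ?_ ?_ hX)⟩
    · exact fun Y hY ↦ (mem_shSet_iff (coaisle_iso hS.sub₂) (add_neg_cancel 1)).1 hY.2
    · exact fun Y ↦ shift_mem_shSet (-1) fun Z hZ ↦
        (mem_shSet_iff (coaisle_iso hS.sub₁) (add_neg_cancel 1)).1 hZ.2

end Glued

end Pretriangulated

/-! ### Finite sums of shifts -/

section SumShifts

attribute [local instance] hasBinaryBiproducts_of_finite_biproducts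

variable {D : Type*} [Category* D] [Preadditive D] [HasFiniteBiproducts D]

lemma biproduct_hom_eq_zero {m n : ℕ} {F : Fin m → D} {G : Fin n → D}
    (h : ∀ i j, ∀ f : F i ⟶ G j, f = 0) (f : ⨁ F ⟶ ⨁ G) : f = 0 :=
  biproduct.hom_ext' _ _ fun i ↦ biproduct.hom_ext _ _ fun j ↦ by simp [h i j]

lemma isZero_biproduct_fin_zero (F : Fin 0 → D) : IsZero (⨁ F) := by
  rw [IsZero.iff_id_eq_zero]
  exact biproduct.hom_ext _ _ fun j ↦ j.elim0

/-- The splitting of the `i`-th summand off a finite biproduct, for inductions on the number of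
summands. -/
noncomputable def biproductIsoSuccAbove {n : ℕ} (F : Fin (n + 1) → D) (i : Fin (n + 1)) :
    ⨁ F ≅ F i ⊞ ⨁ fun j ↦ F (i.succAbove j) where
  hom := biprod.lift (biproduct.π F i) (biproduct.lift fun j ↦ biproduct.π F (i.succAbove j))
  inv := biprod.desc (biproduct.ι F i) (biproduct.desc fun j ↦ biproduct.ι F (i.succAbove j))
  hom_inv_id := by
    rw [biprod.lift_desc, biproduct.lift_desc, ← biproduct.total, Fin.sum_univ_succAbove _ i]
  inv_hom_id := by
    ext <;> simp [biproduct.ι_π]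

variable [HasShift D ℤ]

/-- The objects isomorphic to finite direct sums of shifts `E⟦k⟧` with `k ∈ I`, the common form of
`sumShifts`, `sumShiftsNonneg` and `sumCopies`. -/
def sumShiftsIn (I : Set ℤ) (E : D) : Set D :=
  {X | ∃ (m : ℕ) (k : Fin m → ℤ), (∀ j, k j ∈ I) ∧ Nonempty (X ≅ ⨁ fun j ↦ E⟦k j⟧)}

variable {I J : Set ℤ} {E F X Y : D}

lemma sumShiftsIn_mono (h : I ⊆ J) : sumShiftsIn I E ⊆ sumShiftsIn J E :=
  fun _ ⟨m, k, hk, e⟩ ↦ ⟨m, k, fun j ↦ h (hk j), e⟩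

lemma sumShiftsIn_iso (e : X ≅ Y) (hX : X ∈ sumShiftsIn I E) : Y ∈ sumShiftsIn I E := by
  obtain ⟨m, k, hk, ⟨e'⟩⟩ := hX
  exact ⟨m, k, hk, ⟨e.symm ≪≫ e'⟩⟩

lemma mem_sumShiftsIn_of_isZero (hX : IsZero X) : X ∈ sumShiftsIn I E :=
  ⟨0, Fin.elim0, fun j ↦ j.elim0, ⟨hX.iso (isZero_biproduct_fin_zero _)⟩⟩

lemma mem_sumShiftsIn_of_iso_biprod {k : ℤ} (hk : k ∈ I) (hY : Y ∈ sumShiftsIn I E)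
    (e : X ≅ E⟦k⟧ ⊞ Y) : X ∈ sumShiftsIn I E := by
  obtain ⟨m, l, hl, ⟨e'⟩⟩ := hY
  refine ⟨m + 1, Fin.cons k l, Fin.cases hk hl, ⟨e ≪≫ biprod.mapIso (Iso.refl _) e' ≪≫ ?_⟩⟩
  exact (biproductIsoSuccAbove (fun j ↦ E⟦(Fin.cons k l : Fin (m + 1) → ℤ) j⟧) 0).symm

@[elab_as_elim]
lemma sumShiftsIn_induction {motive : ∀ X, X ∈ sumShiftsIn I E → Prop}
    (zero : ∀ X (hX : IsZero X), motive X (mem_sumShiftsIn_of_isZero hX))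
    (biprod : ∀ k (hk : k ∈ I) X Y (hY : Y ∈ sumShiftsIn I E) (e : X ≅ E⟦k⟧ ⊞ Y),
      motive Y hY → motive X (mem_sumShiftsIn_of_iso_biprod hk hY e))
    (hX : X ∈ sumShiftsIn I E) : motive X hX := by
  obtain ⟨m, k, hk, ⟨e⟩⟩ := hX
  induction m generalizing X with
  | zero => exact zero X ((isZero_biproduct_fin_zero _).of_iso e)
  | succ m ih =>
    exact biprod (k 0) (hk 0) X _ ⟨m, _, fun j ↦ hk _, ⟨Iso.refl _⟩⟩
      (e ≪≫ biproductIsoSuccAbove _ 0)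
      (ih (fun j ↦ k (Fin.succAbove 0 j)) (fun j ↦ hk _) (Iso.refl _))

lemma exists_iso_biprod_of_hom_ne_zero (hX : X ∈ sumShiftsIn I E) {W : D} (u : W ⟶ X)
    (hu : u ≠ 0) : ∃ k ∈ I, ∃ Y ∈ sumShiftsIn I E, ∃ e : X ≅ E⟦k⟧ ⊞ Y,
      u ≫ e.hom ≫ biprod.fst ≠ 0 := by
  obtain ⟨m, k, hk, ⟨e⟩⟩ := hX
  obtain ⟨i, hi⟩ : ∃ i, u ≫ e.hom ≫ biproduct.π _ i ≠ 0 := by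
    by_contra! h
    refine hu ((cancel_mono e.hom).1 (biproduct.hom_ext _ _ fun i ↦ ?_))
    rw [assoc, h i, zero_comp, zero_comp]
  obtain _ | m := m
  · exact i.elim0
  exact ⟨k i, hk i, _, ⟨m, _, fun j ↦ hk _, ⟨Iso.refl _⟩⟩, e ≪≫ biproductIsoSuccAbove _ i,
    by simpa [biproductIsoSuccAbove] using hi⟩

lemma exists_iso_biprod_inter_diff (hX : X ∈ sumShiftsIn I E) (J : Set ℤ) :
    ∃ A ∈ sumShiftsIn (I ∩ J) E, ∃ B ∈ sumShiftsIn (I \ J) E, Nonempty (X ≅ A ⊞ B) := by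
  induction hX using sumShiftsIn_induction with
  | zero X hX =>
    exact ⟨X, mem_sumShiftsIn_of_isZero hX, X, mem_sumShiftsIn_of_isZero hX, ⟨isoZeroBiprod hX⟩⟩
  | biprod k hk X Y _ e ih =>
    obtain ⟨A, hA, B, hB, ⟨e'⟩⟩ := ih
    by_cases hkJ : k ∈ J
    · exact ⟨_, mem_sumShiftsIn_of_iso_biprod ⟨hk, hkJ⟩ hA (Iso.refl _), B, hB,
        ⟨e ≪≫ biprod.mapIso (Iso.refl _) e' ≪≫ (biprod.associator _ _ _).symm⟩⟩
    · exact ⟨A, hA, _, mem_sumShiftsIn_of_iso_biprod ⟨hk, hkJ⟩ hB (biprod.braiding _ _),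
        ⟨e ≪≫ biprod.mapIso (Iso.refl _) (e' ≪≫ biprod.braiding _ _) ≪≫
          (biprod.associator _ _ _).symm ≪≫ biprod.braiding _ _ ≪≫
            biprod.mapIso (Iso.refl _) (biprod.braiding _ _)⟩⟩

lemma exists_mem_sumShiftsIn_Icc (hX : X ∈ sumShiftsIn I E) :
    ∃ N : ℤ, X ∈ sumShiftsIn (Set.Icc (-N) N) E := by
  obtain ⟨m, k, -, e⟩ := hX
  exact ⟨∑ j, |k j|, m, k, fun j ↦
    abs_le.1 (Finset.single_le_sum (fun j _ ↦ abs_nonneg (k j)) (Finset.mem_univ j)), e⟩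

lemma mem_sumShiftsIn_of_iso_shift {k : ℤ} (hk : k ∈ I) (e : X ≅ E⟦k⟧) : X ∈ sumShiftsIn I E :=
  ⟨1, fun _ ↦ k, fun _ ↦ hk, ⟨e ≪≫ (biproductUniqueIso fun _ : Fin 1 ↦ E⟦k⟧).symm⟩⟩

lemma sumShifts_eq (E : D) : sumShifts E = sumShiftsIn Set.univ E := by
  simp [sumShifts, sumShiftsIn]

lemma sumShiftsNonneg_eq (E : D) : sumShiftsNonneg E = sumShiftsIn (Set.Ici 0) E := rfl

lemma sumCopies_eq (E : D) : sumCopies E = sumShiftsIn {0} E := by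
  ext X
  refine ⟨fun ⟨m, ⟨e⟩⟩ ↦ ⟨m, fun _ ↦ 0, fun _ ↦ rfl,
    ⟨e ≪≫ biproduct.mapIso fun _ ↦ (shiftZero ℤ E).symm⟩⟩, fun ⟨m, k, hk, ⟨e⟩⟩ ↦ ?_⟩
  obtain rfl : k = fun _ ↦ 0 := funext hk
  exact ⟨m, ⟨e ≪≫ biproduct.mapIso fun _ ↦ shiftZero ℤ E⟩⟩

variable [∀ n : ℤ, (shiftFunctor D n).Additive]

lemma hom_eq_zero_of_mem_sumShiftsIn (hX : X ∈ sumShiftsIn I E) (hY : Y ∈ sumShiftsIn J F)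
    (h : ∀ k ∈ I, ∀ l ∈ J, ∀ f : E ⟶ F⟦l - k⟧, f = 0) (f : X ⟶ Y) : f = 0 := by
  obtain ⟨m, k, hk, ⟨e⟩⟩ := hX
  obtain ⟨n, l, hl, ⟨e'⟩⟩ := hY
  exact hom_eq_zero_of_iso e.symm e'.symm (biproduct_hom_eq_zero fun i j ↦
    hom_shift_shift_eq_zero (sub_add_cancel _ _) (h _ (hk i) _ (hl j))) f

lemma mem_sumShiftsIn_of_hom_eq_zero (hE : ¬ IsZero E) (hX : X ∈ sumShiftsIn I E)
    (h : ∀ k ∈ I \ J, ∀ f : E⟦k⟧ ⟶ X, f = 0) : X ∈ sumShiftsIn J E := by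
  obtain ⟨m, k, hk, ⟨e⟩⟩ := hX
  refine ⟨m, k, fun j ↦ by_contra fun hj ↦ hE ?_, ⟨e⟩⟩
  rw [IsZero.iff_id_eq_zero]
  apply (shiftFunctor D (k j)).map_injective
  have hι : biproduct.ι (fun j ↦ E⟦k j⟧) j ≫ e.inv = 0 := h (k j) ⟨hk j, hj⟩ _
  calc (𝟙 E)⟦k j⟧' = (biproduct.ι (fun j ↦ E⟦k j⟧) j ≫ e.inv) ≫ e.hom ≫ biproduct.π _ j := by simp
    _ = 0⟦k j⟧' := by rw [hι, zero_comp, Functor.map_zero]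

lemma shift_mem_sumShiftsIn (n : ℤ) (h : ∀ k ∈ I, k + n ∈ J) (hX : X ∈ sumShiftsIn I E) :
    X⟦n⟧ ∈ sumShiftsIn J E := by
  obtain ⟨m, k, hk, ⟨e⟩⟩ := hX
  exact ⟨m, fun j ↦ k j + n, fun j ↦ h _ (hk j), ⟨(shiftFunctor D n).mapIso e ≪≫
    (shiftFunctor D n).mapBiproduct _ ≪≫ biproduct.mapIso fun j ↦ (shiftAdd E (k j) n).symm⟩⟩

lemma shift_mem_sumShiftsIn_iff (n : ℤ) :
    X⟦n⟧ ∈ sumShiftsIn J E ↔ X ∈ sumShiftsIn ((· + n) ⁻¹' J) E := by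
  refine ⟨fun h ↦ sumShiftsIn_iso (shiftShiftNeg X n) (shift_mem_sumShiftsIn (-n) ?_ h),
    shift_mem_sumShiftsIn n fun _ hk ↦ hk⟩
  simp

lemma shSet_sumShiftsIn (n : ℤ) :
    shSet (sumShiftsIn I E) n = sumShiftsIn ((· - n) ⁻¹' I) E := by
  ext X
  simp only [mem_shSet_iff sumShiftsIn_iso (add_neg_cancel n), shift_mem_sumShiftsIn_iff,
    sub_eq_add_neg]

end SumShifts

/-! ### Cones of maps between sums of shifts -/

section BiprodCone

/-- The comparison of a binary biproduct with the product indexed by `WalkingPair`, through which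
`productTriangle_distinguished` applies to two triangles. -/
noncomputable def biprodIsoPi {D : Type*} [Category* D] [HasZeroMorphisms D]
    [HasBinaryBiproducts D] (F : WalkingPair → D) [HasProduct F] :
    F .left ⊞ F .right ≅ ∏ᶜ F where
  hom := Pi.lift (fun
    | .left => biprod.fst
    | .right => biprod.snd)
  inv := biprod.lift (Pi.π F .left) (Pi.π F .right)
  inv_hom_id := by
    apply Pi.hom_ext
    rintro (_ | _) <;> simp

lemma biprod_map_biprodIsoPi_hom {D : Type*} [Category* D] [HasZeroMorphisms D]
    [HasBinaryBiproducts D] {F G : WalkingPair → D} [HasProduct F] [HasProduct G]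
    (φ : ∀ j, F j ⟶ G j) :
    biprod.map (φ .left) (φ .right) ≫ (biprodIsoPi G).hom =
      (biprodIsoPi F).hom ≫ Limits.Pi.map φ := by
  apply Pi.hom_ext
  rintro (_ | _) <;> simp [biprodIsoPi]

omit [HasFiniteBiproducts C]

variable {X Y Z X₁ Y₁ Z₁ X₂ Y₂ Z₂ : C}

lemma nonempty_iso_biprod_obj₃ {S : Triangle C} (hS : S ∈ distTriang C)
    {T : WalkingPair → Triangle C} (hT : ∀ j, T j ∈ distTriang C)
    (e₁ : S.obj₁ ≅ (T .left).obj₁ ⊞ (T .right).obj₁)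
    (e₂ : S.obj₂ ≅ (T .left).obj₂ ⊞ (T .right).obj₂)
    (comm : S.mor₁ ≫ e₂.hom = e₁.hom ≫ biprod.map (T .left).mor₁ (T .right).mor₁) :
    Nonempty (S.obj₃ ≅ (T .left).obj₃ ⊞ (T .right).obj₃) := by
  have comm' : S.mor₁ ≫ e₂.hom ≫ (biprodIsoPi fun j ↦ (T j).obj₂).hom =
      (e₁.hom ≫ (biprodIsoPi fun j ↦ (T j).obj₁).hom) ≫ Limits.Pi.map fun j ↦ (T j).mor₁ := by
    rw [assoc, ← biprod_map_biprodIsoPi_hom, ← assoc, comm, assoc]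
  let e := isoTriangleOfIso₁₂ S (productTriangle T) hS (productTriangle_distinguished T hT)
    (e₁ ≪≫ biprodIsoPi fun j ↦ (T j).obj₁) (e₂ ≪≫ biprodIsoPi fun j ↦ (T j).obj₂) comm'
  exact ⟨Triangle.π₃.mapIso e ≪≫ (biprodIsoPi fun j ↦ (T j).obj₃).symm⟩

lemma nonempty_iso_biprod_cone {f : X ⟶ Y} {g : Y ⟶ Z} {h : Z ⟶ X⟦(1 : ℤ)⟧}
    (hT : Triangle.mk f g h ∈ distTriang C)
    {f₁ : X₁ ⟶ Y₁} {g₁ : Y₁ ⟶ Z₁} {h₁ : Z₁ ⟶ X₁⟦(1 : ℤ)⟧}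
    (hT₁ : Triangle.mk f₁ g₁ h₁ ∈ distTriang C)
    {f₂ : X₂ ⟶ Y₂} {g₂ : Y₂ ⟶ Z₂} {h₂ : Z₂ ⟶ X₂⟦(1 : ℤ)⟧}
    (hT₂ : Triangle.mk f₂ g₂ h₂ ∈ distTriang C) (eX : X ≅ X₁ ⊞ X₂) (eY : Y ≅ Y₁ ⊞ Y₂)
    (comm : f ≫ eY.hom = eX.hom ≫ biprod.map f₁ f₂) : Nonempty (Z ≅ Z₁ ⊞ Z₂) :=
  nonempty_iso_biprod_obj₃ hT
    (T := fun
      | .left => Triangle.mk f₁ g₁ h₁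
      | .right => Triangle.mk f₂ g₂ h₂)
    (by rintro (_ | _) <;> assumption) eX eY comm

open scoped ZeroObject in
lemma nonempty_cone_iso_shift_biprod {f : X ⟶ Y} {g : Y ⟶ Z} {h : Z ⟶ X⟦(1 : ℤ)⟧}
    (hT : Triangle.mk f g h ∈ distTriang C) (e : X ≅ X₁ ⊞ X₂)
    (h₀ : biprod.inl ≫ e.inv ≫ f = 0)
    {g₂ : Y ⟶ Z₂} {h₂ : Z₂ ⟶ X₂⟦(1 : ℤ)⟧}
    (hT₂ : Triangle.mk (biprod.inr ≫ e.inv ≫ f) g₂ h₂ ∈ distTriang C) :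
    Nonempty (Z ≅ X₁⟦(1 : ℤ)⟧ ⊞ Z₂) := by
  refine nonempty_iso_biprod_cone hT (contractible_distinguished₂ X₁) hT₂ e
    (isoZeroBiprod (isZero_zero C)) ?_
  rw [← Iso.inv_comp_eq]
  ext <;> simp [h₀]

-- Gaussian elimination makes `f` diagonal without changing the invertible component.
lemma exists_distTriang_of_isIso_component {f : X ⟶ Y} {g : Y ⟶ Z} {h : Z ⟶ X⟦(1 : ℤ)⟧}
    (hT : Triangle.mk f g h ∈ distTriang C) (eX : X ≅ X₁ ⊞ X₂) (eY : Y ≅ Y₁ ⊞ Y₂)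
    (hf : IsIso (biprod.inl ≫ (eX.inv ≫ f ≫ eY.hom) ≫ biprod.fst)) :
    ∃ (f' : X₂ ⟶ Y₂) (g' : Y₂ ⟶ Z) (h' : Z ⟶ X₂⟦(1 : ℤ)⟧),
      Triangle.mk f' g' h' ∈ distTriang C := by
  obtain ⟨L, R, f₂, hLR⟩ := Biprod.gaussian (eX.inv ≫ f ≫ eY.hom)
  obtain ⟨Z₁, g₁, h₁, hT₁⟩ :=
    distinguished_cocone_triangle (biprod.inl ≫ (eX.inv ≫ f ≫ eY.hom) ≫ biprod.fst)
  obtain ⟨Z₂, g₂, h₂, hT₂⟩ := distinguished_cocone_triangle f₂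
  obtain ⟨e⟩ := nonempty_iso_biprod_cone hT hT₁ hT₂ (eX ≪≫ L.symm) (eY ≪≫ R) (by
    rw [← hLR]
    simp)
  have hZ₁ : IsZero Z₁ := (Triangle.isZero₃_iff_isIso₁ _ hT₁).2 hf
  let e₂ : Z ≅ Z₂ := e ≪≫ (isoZeroBiprod hZ₁).symm
  refine ⟨f₂, g₂ ≫ e₂.inv, e₂.hom ≫ h₂, isomorphic_distinguished _ hT₂ _ ?_⟩
  exact Triangle.isoMk _ _ (Iso.refl _) (Iso.refl _) e₂
    (by simp [Triangle.mk]) (by simp [Triangle.mk]) (by simp [Triangle.mk])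

end BiprodCone

lemma cone_mem_sumShiftsIn_univ {E X Y Z : C}
    (hE : ∀ (k l : ℤ) (f : E⟦k⟧ ⟶ E⟦l⟧), f ≠ 0 → IsIso f)
    {f : X ⟶ Y} {g : Y ⟶ Z} {h : Z ⟶ X⟦(1 : ℤ)⟧} (hT : Triangle.mk f g h ∈ distTriang C)
    (hX : X ∈ sumShiftsIn Set.univ E) (hY : Y ∈ sumShiftsIn Set.univ E) :
    Z ∈ sumShiftsIn Set.univ E := by
  induction hX using sumShiftsIn_induction generalizing Y Z with
  | zero X hX =>
    have : IsIso g := (Triangle.isZero₁_iff_isIso₂ _ hT).1 hX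
    exact sumShiftsIn_iso (asIso g) hY
  | biprod k _ X X' _ e ih =>
    by_cases h₀ : biprod.inl ≫ e.inv ≫ f = 0
    · obtain ⟨Z', g', h', hT'⟩ := distinguished_cocone_triangle (biprod.inr ≫ e.inv ≫ f)
      obtain ⟨eZ⟩ := nonempty_cone_iso_shift_biprod hT e h₀ hT'
      exact mem_sumShiftsIn_of_iso_biprod (Set.mem_univ (k + 1)) (ih hT' hY)
        (eZ ≪≫ biprod.mapIso (shiftAdd E k 1).symm (Iso.refl _))
    · obtain ⟨l, _, Y', hY', e', he'⟩ := exists_iso_biprod_of_hom_ne_zero hY _ h₀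
      obtain ⟨f', g', h', hT'⟩ :=
        exists_distTriang_of_isIso_component hT e e' (hE k l _ (by simpa using he'))
      exact ih hT' hY'

lemma isTriangulatedSub_sumShiftsIn_univ {E : C}
    (hE : ∀ (k l : ℤ) (f : E⟦k⟧ ⟶ E⟦l⟧), f ≠ 0 → IsIso f) :
    IsTriangulatedSub (sumShiftsIn Set.univ E) where
  zero _ := mem_sumShiftsIn_of_isZero
  isoClosed := sumShiftsIn_iso
  shift n _ := shift_mem_sumShiftsIn n fun _ _ ↦ trivial
  ext₂ T hT h₁ h₃ := cone_mem_sumShiftsIn_univ hE (inv_rot_of_distTriang T hT)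
    (shift_mem_sumShiftsIn (-1) (fun _ _ ↦ trivial) h₃) h₁

/-! ### Exceptional objects -/

section ShiftBrick

variable {D : Type*} [Category* D] [Preadditive D] [HasShift D ℤ] {E : D}

/-- The part of exceptionality that does not mention the ground field: a nonzero object whose
endomorphism ring is a division ring and which has no maps to its nontrivial shifts. -/
structure IsShiftBrick (E : D) : Prop where
  not_isZero : ¬ IsZero E
  isIso_of_ne_zero : ∀ f : E ⟶ E, f ≠ 0 → IsIso f
  hom_shift_eq_zero : ∀ n : ℤ, n ≠ 0 → ∀ f : E ⟶ E⟦n⟧, f = 0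

lemma IsExceptional.isShiftBrick {K : Type*} [Field K] [Linear K D] (hE : IsExceptional K E) :
    IsShiftBrick E where
  not_isZero := hE.1
  isIso_of_ne_zero f hf := by
    obtain ⟨a, rfl⟩ := hE.2.1 f
    have ha : a ≠ 0 := by
      rintro rfl
      exact hf (zero_smul K _)
    exact ⟨a⁻¹ • 𝟙 E, by simp [smul_smul, ha], by simp [smul_smul, ha]⟩
  hom_shift_eq_zero := hE.2.2

namespace IsShiftBrick

variable [∀ n : ℤ, (shiftFunctor D n).Additive]

lemma isIso_of_hom_shift_ne_zero (hE : IsShiftBrick E) (k l : ℤ) (f : E⟦k⟧ ⟶ E⟦l⟧)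
    (hf : f ≠ 0) : IsIso f := by
  obtain rfl : k = l := by
    by_contra hkl
    exact hf (hom_shift_shift_eq_zero (sub_add_cancel l k)
      (hE.hom_shift_eq_zero _ (sub_ne_zero.2 (Ne.symm hkl))) f)
  obtain ⟨g, rfl⟩ := (shiftFunctor D k).map_surjective f
  have : IsIso g := hE.isIso_of_ne_zero g fun hg ↦ hf (by rw [hg, Functor.map_zero])
  infer_instance

variable [HasFiniteBiproducts D] {I J : Set ℤ}

lemma hom_eq_zero_of_disjoint (hE : IsShiftBrick E) (hIJ : Disjoint I J) {X Y : D}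
    (hX : X ∈ sumShiftsIn I E) (hY : Y ∈ sumShiftsIn J E) (f : X ⟶ Y) : f = 0 :=
  hom_eq_zero_of_mem_sumShiftsIn hX hY
    (fun _ hk _ hl ↦ hE.hom_shift_eq_zero _ (sub_ne_zero.2 (hIJ.ne_of_mem hk hl).symm)) f

lemma sumShiftsIn_inter (hE : IsShiftBrick E) :
    sumShiftsIn I E ∩ sumShiftsIn J E = sumShiftsIn (I ∩ J) E := by
  refine Set.Subset.antisymm (fun X ⟨hI, hJ⟩ ↦ ?_) fun X hX ↦
    ⟨sumShiftsIn_mono Set.inter_subset_left hX, sumShiftsIn_mono Set.inter_subset_right hX⟩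
  refine mem_sumShiftsIn_of_hom_eq_zero hE.not_isZero hI fun k hk ↦ ?_
  exact hE.hom_eq_zero_of_disjoint (Set.disjoint_singleton_left.2 fun hkJ ↦ hk.2 ⟨hk.1, hkJ⟩)
    (mem_sumShiftsIn_of_iso_shift rfl (Iso.refl _)) hJ

lemma sumShiftsIn_univ_inter_rOrth (hE : IsShiftBrick E) :
    sumShiftsIn Set.univ E ∩ rOrth (sumShiftsIn (Set.Ici 0) E) = sumShiftsIn (Set.Iio 0) E := by
  refine Set.Subset.antisymm (fun X ⟨hX, hX'⟩ ↦ ?_) fun X hX ↦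
    ⟨sumShiftsIn_mono (Set.subset_univ _) hX, fun W hW ↦
      hE.hom_eq_zero_of_disjoint (Set.Iio_disjoint_Ici le_rfl).symm hW hX⟩
  exact mem_sumShiftsIn_of_hom_eq_zero hE.not_isZero hX fun k hk ↦
    hX' _ (mem_sumShiftsIn_of_iso_shift (Set.mem_Ici.2 (not_lt.1 hk.2)) (Iso.refl _))

lemma compatible_sumShiftsIn {F : D} (hE : IsShiftBrick E)
    (hstrong : ∀ n : ℤ, n ≠ 0 → ∀ f : F ⟶ E⟦n⟧, f = 0) :
    Compatible (sumShiftsIn Set.univ E) (sumShiftsIn (Set.Ici 0) F)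
      (sumShiftsIn (Set.Ici 0) E) := by
  intro X hX Y hY
  rw [hE.sumShiftsIn_univ_inter_rOrth] at hY
  exact hom_eq_zero_of_mem_sumShiftsIn hX hY fun k hk l hl ↦
    hstrong _ (sub_neg.2 (lt_of_lt_of_le hl hk)).ne

end IsShiftBrick

end ShiftBrick

namespace IsShiftBrick

variable {E : C}

theorem isTStructureOn_sumShiftsIn (hE : IsShiftBrick E) :
    IsTStructureOn (sumShiftsIn Set.univ E) (sumShiftsIn (Set.Ici 0) E) where
  subset := sumShiftsIn_mono (Set.subset_univ _)
  isoClosed := sumShiftsIn_iso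
  shift _ := shift_mem_sumShiftsIn 1 fun _ hk ↦
    Set.mem_Ici.2 (add_nonneg (Set.mem_Ici.1 hk) zero_le_one)
  exists_triangle X hX := by
    rw [hE.sumShiftsIn_univ_inter_rOrth]
    obtain ⟨A, hA, B, hB, ⟨e⟩⟩ := exists_iso_biprod_inter_diff hX (Set.Ici 0)
    rw [Set.univ_inter] at hA
    rw [← Set.compl_eq_univ_sdiff, Set.compl_Ici] at hB
    obtain ⟨A, hA, B, hB, f, g, h, hT⟩ := star_iso e.symm
      ⟨A, hA, B, hB, _, _, _, binaryBiproductTriangle_distinguished A B⟩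
    exact ⟨A, B, hA, hB, f, g, h, hT⟩

theorem isBoundedOn_sumShiftsIn (hE : IsShiftBrick E) :
    IsBoundedOn (sumShiftsIn Set.univ E) (sumShiftsIn (Set.Ici 0) E) := by
  refine (hE.isTStructureOn_sumShiftsIn.isBoundedOn_iff
    (isTriangulatedSub_sumShiftsIn_univ hE.isIso_of_hom_shift_ne_zero)).2 fun X hX ↦ ?_
  obtain ⟨N, hN⟩ := exists_mem_sumShiftsIn_Icc hX
  rw [hE.sumShiftsIn_univ_inter_rOrth]
  refine ⟨N + 1, fun n hn ↦ ⟨shift_mem_sumShiftsIn n (fun k hk ↦ ?_) hN,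
    shift_mem_sumShiftsIn (-n) (fun k hk ↦ ?_) hN⟩⟩
  · have := hk.1
    exact Set.mem_Ici.2 (by lia)
  · have := hk.2
    exact Set.mem_Iio.2 (by lia)

theorem heartOn_sumShiftsIn (hE : IsShiftBrick E) :
    heartOn (sumShiftsIn Set.univ E) (sumShiftsIn (Set.Ici 0) E) = sumShiftsIn {0} E := by
  rw [hE.isTStructureOn_sumShiftsIn.heartOn_eq, hE.sumShiftsIn_univ_inter_rOrth,
    shSet_sumShiftsIn, hE.sumShiftsIn_inter]
  congr 1
  ext k
  simp only [Set.mem_inter_iff, Set.mem_Ici, Set.mem_preimage, Set.mem_Iio, Set.mem_singleton_iff]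
  lia

end IsShiftBrick

/-! ### Exceptional pairs -/

section ExceptionalPair

variable {E₁ E₂ : C}

theorem isSOD_sumShiftsIn (hE₁ : IsShiftBrick E₁) (hE₂ : IsShiftBrick E₂)
    (hseq : ∀ n : ℤ, ∀ f : E₂ ⟶ E₁⟦n⟧, f = 0)
    (hfull : ∀ S : Set C, IsTriangulatedSub S → E₁ ∈ S → E₂ ∈ S → ∀ X : C, X ∈ S) :
    IsSOD (sumShiftsIn Set.univ E₁) (sumShiftsIn Set.univ E₂) := by
  have h₁ := isTriangulatedSub_sumShiftsIn_univ hE₁.isIso_of_hom_shift_ne_zero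
  have h₂ := isTriangulatedSub_sumShiftsIn_univ hE₂.isIso_of_hom_shift_ne_zero
  have orth : ∀ X ∈ sumShiftsIn Set.univ E₂, ∀ Y ∈ sumShiftsIn Set.univ E₁, ∀ f : X ⟶ Y, f = 0 :=
    fun X hX Y hY ↦ hom_eq_zero_of_mem_sumShiftsIn hX hY fun k _ l _ ↦ hseq (l - k)
  have mem_self (E : C) : E ∈ sumShiftsIn Set.univ E :=
    mem_sumShiftsIn_of_iso_shift (Set.mem_univ 0) (shiftZero ℤ E).symm
  refine ⟨h₁, h₂, orth, fun X ↦ ?_⟩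
  obtain ⟨A, hA, B, hB, f, g, h, hT⟩ :
      X ∈ star (sumShiftsIn Set.univ E₂) (sumShiftsIn Set.univ E₁) :=
    hfull _ (isTriangulatedSub_star h₁ h₂ orth)
      (subset_star_right (h₂.zero _ (isZero_zero C)) (mem_self E₁))
      (subset_star_left (h₁.zero _ (isZero_zero C)) (mem_self E₂)) X
  exact ⟨A, B, hA, hB, f, g, h, hT⟩

theorem hom_shift_eq_zero_of_mem_star_sumShiftsIn (hE₁ : IsShiftBrick E₁)
    (hE₂ : IsShiftBrick E₂) (hseq : ∀ n : ℤ, ∀ f : E₂ ⟶ E₁⟦n⟧, f = 0)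
    (hstrong : ∀ n : ℤ, n ≠ 0 → ∀ f : E₁ ⟶ E₂⟦n⟧, f = 0) {A B : C}
    (hA : A ∈ star (sumShiftsIn {0} E₂) (shSet (sumShiftsIn {0} E₁) 1))
    (hB : B ∈ star (sumShiftsIn {0} E₂) (shSet (sumShiftsIn {0} E₁) 1)) {n : ℤ} (hn : 1 < n) :
    ∀ f : A ⟶ B⟦n⟧, f = 0 := by
  have h₁ : shSet (sumShiftsIn {0} E₁) 1 = sumShiftsIn {1} E₁ := by
    simp [shSet_sumShiftsIn, Set.preimage, sub_eq_zero]
  rw [h₁] at hA hB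
  have hBn : B⟦n⟧ ∈ star (sumShiftsIn {n} E₂) (sumShiftsIn {1 + n} E₁) :=
    shift_mem_star n (fun _ ↦ shift_mem_sumShiftsIn n (by simp))
      (fun _ ↦ shift_mem_sumShiftsIn n (by simp)) hB
  refine hom_from_star_eq_zero hA
    (fun P hP ↦ hom_to_star_eq_zero hBn (fun Q hQ ↦ ?_) fun Q hQ ↦ ?_)
    (fun P hP ↦ hom_to_star_eq_zero hBn (fun Q hQ ↦ ?_) fun Q hQ ↦ ?_)
  · exact hE₂.hom_eq_zero_of_disjoint (Set.disjoint_singleton.2 (by lia)) hP hQ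
  · exact hom_eq_zero_of_mem_sumShiftsIn hP hQ fun k _ l _ ↦ hseq (l - k)
  · exact hom_eq_zero_of_mem_sumShiftsIn hP hQ fun k hk l hl ↦ hstrong _ (by
      rw [Set.mem_singleton_iff] at hk hl
      lia)
  · exact hE₁.hom_eq_zero_of_disjoint (Set.disjoint_singleton.2 (by lia)) hP hQ

theorem exceptional_pair_glued_heart_general (hE₁ : IsShiftBrick E₁) (hE₂ : IsShiftBrick E₂)
    (hseq : ∀ n : ℤ, ∀ f : E₂ ⟶ E₁⟦n⟧, f = 0)
    (hstrong : ∀ n : ℤ, n ≠ 0 → ∀ f : E₁ ⟶ E₂⟦n⟧, f = 0)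
    (hfull : ∀ S : Set C, IsTriangulatedSub S → E₁ ∈ S → E₂ ∈ S → ∀ X : C, X ∈ S) :
    IsSOD (sumShifts E₁) (sumShifts E₂) ∧
    IsTStructureOn (sumShifts E₁) (sumShiftsNonneg E₁) ∧
      IsBoundedOn (sumShifts E₁) (sumShiftsNonneg E₁) ∧
      heartOn (sumShifts E₁) (sumShiftsNonneg E₁) = sumCopies E₁ ∧
    IsTStructureOn (sumShifts E₂) (sumShiftsNonneg E₂) ∧
      IsBoundedOn (sumShifts E₂) (sumShiftsNonneg E₂) ∧
      heartOn (sumShifts E₂) (sumShiftsNonneg E₂) = sumCopies E₂ ∧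
    Compatible (sumShifts E₂) (sumShiftsNonneg E₁) (sumShiftsNonneg E₂) ∧
    IsTStructureOn Set.univ (glued (sumShiftsNonneg E₁) (sumShiftsNonneg E₂)) ∧
    IsBoundedOn Set.univ (glued (sumShiftsNonneg E₁) (sumShiftsNonneg E₂)) ∧
    heartOn Set.univ (glued (sumShiftsNonneg E₁) (sumShiftsNonneg E₂)) =
      star (sumCopies E₂) (shSet (sumCopies E₁) 1) ∧
    (∀ A ∈ star (sumCopies E₂) (shSet (sumCopies E₁) 1),
     ∀ B ∈ star (sumCopies E₂) (shSet (sumCopies E₁) 1),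
     ∀ n : ℤ, 1 < n → ∀ f : A ⟶ B⟦n⟧, f = 0) := by
  simp only [sumShifts_eq, sumShiftsNonneg_eq, sumCopies_eq]
  have hS := isSOD_sumShiftsIn hE₁ hE₂ hseq hfull
  have h₁ := hE₁.isTStructureOn_sumShiftsIn
  have h₂ := hE₂.isTStructureOn_sumShiftsIn
  have hc := hE₂.compatible_sumShiftsIn hstrong
  refine ⟨hS, h₁, hE₁.isBoundedOn_sumShiftsIn, hE₁.heartOn_sumShiftsIn,
    h₂, hE₂.isBoundedOn_sumShiftsIn, hE₂.heartOn_sumShiftsIn, hc,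
    isTStructureOn_univ_glued hS h₁ h₂ hc,
    isBoundedOn_univ_glued hS h₁ h₂ hc hE₁.isBoundedOn_sumShiftsIn hE₂.isBoundedOn_sumShiftsIn,
    ?_, fun A hA B hB n ↦ hom_shift_eq_zero_of_mem_star_sumShiftsIn hE₁ hE₂ hseq hstrong hA hB⟩
  rw [heartOn_univ_glued hS h₁ h₂ hc, hE₁.heartOn_sumShiftsIn, hE₂.heartOn_sumShiftsIn]

end ExceptionalPair

/-- Example 2.13 and Corollary 2.14, first part: for a full strong
exceptional pair `⟨E₁, E₂⟩` in a `K`-linear triangulated category with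
`dim_K Hom(E₁, E₂) < ∞`, the subcategories `T_i` generated by the `E_i` form a
semiorthogonal decomposition, each carries a bounded t-structure whose aisle consists of
sums of non-negative shifts of `E_i` and whose heart consists of the sums of copies of
`E_i`; these t-structures are compatible, and the glued subcategory `A₂ * (A₁[1])` is
the heart of a bounded t-structure on `C` of homological dimension at most `1`. -/
theorem exceptional_pair_glued_heart {K : Type*} [Field K] [Linear K C]
    (E₁ E₂ : C)
    (hE₁ : IsExceptional K E₁) (hE₂ : IsExceptional K E₂)
    (hseq : ∀ n : ℤ, ∀ f : E₂ ⟶ E₁⟦n⟧, f = 0)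
    (hstrong : ∀ n : ℤ, n ≠ 0 → ∀ f : E₁ ⟶ E₂⟦n⟧, f = 0)
    (hfull : ∀ S : Set C, IsTriangulatedSub S → E₁ ∈ S → E₂ ∈ S → ∀ X : C, X ∈ S)
    (hfin : FiniteDimensional K (E₁ ⟶ E₂)) :
    IsSOD (sumShifts E₁) (sumShifts E₂) ∧
    IsTStructureOn (sumShifts E₁) (sumShiftsNonneg E₁) ∧
      IsBoundedOn (sumShifts E₁) (sumShiftsNonneg E₁) ∧
      heartOn (sumShifts E₁) (sumShiftsNonneg E₁) = sumCopies E₁ ∧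
    IsTStructureOn (sumShifts E₂) (sumShiftsNonneg E₂) ∧
      IsBoundedOn (sumShifts E₂) (sumShiftsNonneg E₂) ∧
      heartOn (sumShifts E₂) (sumShiftsNonneg E₂) = sumCopies E₂ ∧
    Compatible (sumShifts E₂) (sumShiftsNonneg E₁) (sumShiftsNonneg E₂) ∧
    IsTStructureOn Set.univ (glued (sumShiftsNonneg E₁) (sumShiftsNonneg E₂)) ∧
    IsBoundedOn Set.univ (glued (sumShiftsNonneg E₁) (sumShiftsNonneg E₂)) ∧
    heartOn Set.univ (glued (sumShiftsNonneg E₁) (sumShiftsNonneg E₂)) =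
      star (sumCopies E₂) (shSet (sumCopies E₁) 1) ∧
    (∀ A ∈ star (sumCopies E₂) (shSet (sumCopies E₁) 1),
     ∀ B ∈ star (sumCopies E₂) (shSet (sumCopies E₁) 1),
     ∀ n : ℤ, 1 < n → ∀ f : A ⟶ B⟦n⟧, f = 0) :=
  exceptional_pair_glued_heart_general hE₁.isShiftBrick hE₂.isShiftBrick hseq hstrong hfull

end Paper
end

section
/- Let K be a field, and consider the bounded derived category D^b(P¹_K) of coherent sheaves on the projective line over K. The full subcategory A := { objects isomorphic to O^{⊕a}[2] ⊕ O(1)^{⊕b} for some a, b ≥ 0 } is the heart of a bounded t-structure on D^b(P¹_K). -/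
open CategoryTheory Category Limits Pretriangulated
namespace Paper
universe v u

variable {C : Type u} [Category.{v} C] [HasZeroObject C] [Preadditive C]
  [HasShift C ℤ] [∀ n : ℤ, (shiftFunctor C n).Additive] [Pretriangulated C]

/-- Bridgeland's characterization of a heart of a bounded t-structure on `C`. -/
structure IsHeart [HasBinaryBiproducts C] (H : Set C) : Prop where
  isoClosed : ∀ {X Y : C}, (X ≅ Y) → X ∈ H → Y ∈ H
  zero : ∀ X : C, IsZero X → X ∈ H
  sums : ∀ {X Y : C}, X ∈ H → Y ∈ H → (X ⊞ Y) ∈ H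
  neg_vanish : ∀ A ∈ H, ∀ B ∈ H, ∀ n : ℤ, n < 0 → ∀ f : A ⟶ B⟦n⟧, f = 0
  filtration : ∀ E : C, ∃ (m : ℕ) (obj : Fin (m+1) → C)
    (map : ∀ i : Fin m, obj i.castSucc ⟶ obj i.succ) (k : Fin m → ℤ),
    IsZero (obj 0) ∧ obj (Fin.last m) = E ∧ (∀ i j : Fin m, i < j → k j < k i) ∧
    ∀ i : Fin m, ∃ (A : C) (_ : A ∈ H) (g : obj i.succ ⟶ A⟦k i⟧)
      (h : A⟦k i⟧ ⟶ (obj i.castSucc)⟦(1:ℤ)⟧),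
      Triangle.mk (map i) g h ∈ distTriang C

/-- The glued subcategory `A = { O^{⊕a}[2] ⊕ O(1)^{⊕b} }` of the paper's Remark 5.4,
for an exceptional pair `(O, O1)`. -/
def tiltedSet [HasFiniteBiproducts C] (O O1 : C) : Set C :=
  {X | ∃ a b : ℕ,
    Nonempty (X ≅ (⨁ (fun _ : Fin a => O⟦(2:ℤ)⟧)) ⊞ (⨁ (fun _ : Fin b => O1)))}

/-!
`O⟦2⟧` and `O1` are bricks which generate `C` and have no nonzero morphisms of degree at most `1`
between each other apart from endomorphisms: the only remaining morphisms, from `O⟦2⟧` to `O1`,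
have degree `2`. For such simples `S i`, an object `E` without morphisms to `(S i)⟦m⟧` for `m < n`
can be truncated by its universal morphism to a sum of objects `(S i)⟦n⟧`. The absence of first
extensions makes the morphisms from the fiber to shifted simples start in degree `n + 1`, while a
weight function bounds their degrees from above independently of the step. After finitely many
truncations no such morphism is left, and the last fiber vanishes because the simples generate.
-/

section Shift

variable {D : Type*} [Category* D] [HasShift D ℤ] {X Y : D}

lemma subsingleton_shift_hom_shift_iff {a b c : ℤ} (h : c + a = b) :
    Subsingleton (X⟦a⟧ ⟶ Y⟦b⟧) ↔ Subsingleton (X ⟶ Y⟦c⟧) :=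
  ((((shiftFunctorAdd' D c a b h).app Y).homToEquiv).trans
    (Functor.FullyFaithful.ofFullyFaithful (shiftFunctor D a)).homEquiv.symm).subsingleton_congr

lemma subsingleton_shift_hom_iff {a b : ℤ} (h : a + b = 0) :
    Subsingleton (X⟦a⟧ ⟶ Y) ↔ Subsingleton (X ⟶ Y⟦b⟧) :=
  ((shiftEquiv' D a b h).toAdjunction.homEquiv X Y).subsingleton_congr

lemma subsingleton_hom_shift_shift_iff {a b c : ℤ} (h : a + b = c) :
    Subsingleton (X ⟶ Y⟦a⟧⟦b⟧) ↔ Subsingleton (X ⟶ Y⟦c⟧) :=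
  ((shiftFunctorAdd' D a b c h).app Y).symm.homToEquiv.subsingleton_congr

lemma subsingleton_hom_shift_zero_iff :
    Subsingleton (X ⟶ Y⟦(0 : ℤ)⟧) ↔ Subsingleton (X ⟶ Y) :=
  ((shiftFunctorZero D ℤ).app Y).homToEquiv.subsingleton_congr

end Shift

section Biproducts

variable {D : Type*} [Category* D] [HasZeroMorphisms D]

/-- The isomorphism splitting a biproduct indexed by a disjoint union into two summands. -/
noncomputable def biproductSumIso [HasBinaryBiproducts D] {J K : Type*} (F : J ⊕ K → D)
    [HasBiproduct F] [HasBiproduct fun j => F (.inl j)] [HasBiproduct fun k => F (.inr k)] :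
    (⨁ F) ≅ (⨁ fun j => F (.inl j)) ⊞ (⨁ fun k => F (.inr k)) where
  hom := biprod.lift (biproduct.lift fun j => biproduct.π F (.inl j))
    (biproduct.lift fun k => biproduct.π F (.inr k))
  inv := biproduct.lift fun
    | .inl j => biprod.fst ≫ biproduct.π _ j
    | .inr k => biprod.snd ≫ biproduct.π _ k
  hom_inv_id := by
    refine biproduct.hom_ext _ _ ?_
    rintro (j | k) <;> simp
  inv_hom_id := by
    apply biprod.hom_ext <;> refine biproduct.hom_ext _ _ fun _ => ?_ <;> simp

end Biproducts

section FiniteSums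

universe w

variable {D : Type*} [Category* D] [HasZeroMorphisms D] [HasFiniteBiproducts D] {ι : Type w}
  {S : ι → D} {X Y A B : D}

/-- The objects isomorphic to a finite direct sum of members of the family `S`, with
repetitions. -/
def finiteSums (S : ι → D) : Set D :=
  {X | ∃ (J : Type w) (_ : Finite J) (c : J → ι), Nonempty (X ≅ ⨁ fun j => S (c j))}

lemma mem_finiteSums_of_iso (e : X ≅ Y) (hX : X ∈ finiteSums S) : Y ∈ finiteSums S := by
  obtain ⟨J, hJ, c, ⟨e'⟩⟩ := hX
  exact ⟨J, hJ, c, ⟨e.symm ≪≫ e'⟩⟩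

lemma biproduct_mem_finiteSums {J : Type w} [Finite J] (c : J → ι) :
    (⨁ fun j => S (c j)) ∈ finiteSums S :=
  ⟨J, inferInstance, c, ⟨Iso.refl _⟩⟩

lemma mem_finiteSums_of_isZero (hX : IsZero X) : X ∈ finiteSums S :=
  mem_finiteSums_of_iso (((IsZero.iff_id_eq_zero _).2 (by ext j; exact j.elim)).iso hX)
    (biproduct_mem_finiteSums (PEmpty.elim : PEmpty → ι))

lemma biprod_mem_finiteSums [HasBinaryBiproducts D] (hA : A ∈ finiteSums S)
    (hB : B ∈ finiteSums S) : (A ⊞ B) ∈ finiteSums S := by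
  obtain ⟨J, _, c, ⟨e⟩⟩ := hA
  obtain ⟨K, _, d, ⟨e'⟩⟩ := hB
  exact ⟨J ⊕ K, inferInstance, Sum.elim c d,
    ⟨biprod.mapIso e e' ≪≫ (biproductSumIso fun x => S (Sum.elim c d x)).symm⟩⟩

lemma subsingleton_hom_of_mem_finiteSums_left (hA : A ∈ finiteSums S)
    (h : ∀ i, Subsingleton (S i ⟶ Y)) : Subsingleton (A ⟶ Y) := by
  obtain ⟨J, _, c, ⟨e⟩⟩ := hA
  refine e.homFromEquiv.subsingleton_congr.2 ⟨fun f g => ?_⟩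
  ext j
  exact (h (c j)).elim _ _

lemma subsingleton_hom_of_mem_finiteSums_right (hA : A ∈ finiteSums S)
    (h : ∀ i, Subsingleton (X ⟶ S i)) : Subsingleton (X ⟶ A) := by
  obtain ⟨J, _, c, ⟨e⟩⟩ := hA
  refine e.homToEquiv.subsingleton_congr.2 ⟨fun f g => ?_⟩
  ext j
  exact (h (c j)).elim _ _

lemma exists_fin_sum_fin_equiv_of_walkingPair {J : Type*} [Finite J] (c : J → WalkingPair) :
    ∃ (a b : ℕ) (e : Fin a ⊕ Fin b ≃ J), (∀ k, c (e (.inl k)) = .left) ∧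
      ∀ k, c (e (.inr k)) = .right := by
  let l := Finite.equivFin {j // c j = .left}
  let r := Finite.equivFin {j // c j ≠ .left}
  refine ⟨_, _, (Equiv.sumCongr l.symm r.symm).trans (Equiv.sumCompl (c · = .left)),
    fun k => (l.symm k).2, fun k => ?_⟩
  change c (r.symm k).1 = .right
  cases h : c (r.symm k).1 with
  | left => exact absurd h (r.symm k).2
  | right => rfl

lemma mem_finiteSums_pairFunction_iff [HasBinaryBiproducts D] {Z : D} :
    Z ∈ finiteSums (pairFunction X Y) ↔
      ∃ a b : ℕ, Nonempty (Z ≅ (⨁ fun _ : Fin a => X) ⊞ (⨁ fun _ : Fin b => Y)) := by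
  constructor
  · rintro ⟨J, _, c, ⟨e⟩⟩
    obtain ⟨a, b, r, hl, hr⟩ := exists_fin_sum_fin_equiv_of_walkingPair c
    exact ⟨a, b, ⟨e ≪≫ (biproduct.whiskerEquiv r fun _ => Iso.refl _).symm ≪≫
      biproductSumIso _ ≪≫ biprod.mapIso (biproduct.mapIso fun k => eqToIso (by rw [hl k]; rfl))
        (biproduct.mapIso fun k => eqToIso (by rw [hr k]; rfl))⟩⟩
  · rintro ⟨a, b, ⟨e⟩⟩
    let c : Fin a ⊕ Fin b → WalkingPair := Sum.elim (fun _ => .left) fun _ => .right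
    exact ⟨_, inferInstance, c, ⟨e ≪≫ (biproductSumIso fun x => pairFunction X Y (c x)).symm⟩⟩

end FiniteSums

section Bricks

variable {D : Type*} [Category* D]

/-- A brick: a nonzero object all of whose nonzero endomorphisms are invertible. -/
structure IsBrick [HasZeroMorphisms D] (S : D) : Prop where
  not_isZero : ¬IsZero S
  isIso_or_eq_zero : ∀ f : S ⟶ S, IsIso f ∨ f = 0

lemma IsBrick.map [HasZeroMorphisms D] {E : Type*} [Category* E] [HasZeroMorphisms E]
    (F : D ⥤ E) [F.Full] [F.Faithful] [F.PreservesZeroMorphisms] {S : D} (hS : IsBrick S) :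
    IsBrick (F.obj S) where
  not_isZero h := hS.not_isZero <| (IsZero.iff_id_eq_zero S).2 <| F.map_injective <| h.eq_of_src _ _
  isIso_or_eq_zero f := by
    obtain ⟨f, rfl⟩ := F.map_surjective f
    rcases hS.isIso_or_eq_zero f with h | rfl
    · exact .inl inferInstance
    · exact .inr (F.map_zero _ _)

/-- Schur's lemma: the endomorphism ring of a brick is a division ring. -/
noncomputable abbrev IsBrick.divisionRing [Preadditive D] {S : D} (hS : IsBrick S) :
    DivisionRing (End S) :=
  have : Nontrivial (End S) := ⟨1, 0, fun h => hS.not_isZero ((IsZero.iff_id_eq_zero S).2 h)⟩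
  DivisionRing.ofIsUnitOrEqZero fun f => by
    rw [isUnit_iff_isIso]
    exact hS.isIso_or_eq_zero f

lemma IsExceptional.isBrick {K : Type*} [Field K] [Preadditive D] [HasShift D ℤ] [Linear K D]
    {E : D} (hE : IsExceptional K E) : IsBrick E where
  not_isZero := hE.1
  isIso_or_eq_zero f := by
    obtain ⟨a, rfl⟩ := hE.2.1 f
    rcases eq_or_ne a 0 with rfl | ha
    · exact .inr (zero_smul K _)
    · exact .inl ⟨a⁻¹ • 𝟙 E, by simp [smul_smul, ha], by simp [smul_smul, ha]⟩

end Bricks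

section Coevaluation

universe w

variable {D : Type*} [Category* D]

lemma bijective_π_comp [HasZeroMorphisms D] {J : Type*} [Finite J] (P : J → D) [HasBiproduct P]
    {Y : D} (i : J) (h : ∀ j, j ≠ i → Subsingleton (P j ⟶ Y)) :
    Function.Bijective fun f : P i ⟶ Y => biproduct.π P i ≫ f := by
  refine Function.bijective_iff_has_inverse.2 ⟨fun f => biproduct.ι P i ≫ f, fun f => by simp,
    fun f => biproduct.hom_ext' _ _ fun j => ?_⟩
  rcases eq_or_ne j i with rfl | hj
  · simp
  · exact (h j hj).elim _ _

lemma bijective_homEquiv_comp {E : Type*} [Category* E] {L : D ⥤ E} {R : E ⥤ D} (adj : L ⊣ R)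
    [R.Full] [R.Faithful] {X : D} {A S : E} {g : L.obj X ⟶ A}
    (hg : Function.Bijective fun h : A ⟶ S => g ≫ h) :
    Function.Bijective fun h : R.obj A ⟶ R.obj S => adj.homEquiv X A g ≫ h := by
  have hR := (Functor.FullyFaithful.ofFullyFaithful R).map_bijective A S
  refine (Function.Bijective.of_comp_iff _ hR).1 ?_
  convert (adj.homEquiv X S).bijective.comp hg using 1
  funext h
  exact (adj.homEquiv_naturality_right g h).symm

variable [Preadditive D] [HasFiniteBiproducts D]

lemma IsBrick.exists_bijective_comp {S : D} (hS : IsBrick S) (X : D)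
    [IsNoetherian (End S) (X ⟶ S)] :
    ∃ (n : ℕ) (g : X ⟶ ⨁ fun _ : Fin n => S),
      (Function.Bijective fun h : (⨁ fun _ : Fin n => S) ⟶ S => g ≫ h) ∧
        (0 < n → Nontrivial (X ⟶ S)) := by
  let := hS.divisionRing
  let b := Module.finBasis (End S) (X ⟶ S)
  let n := Module.finrank (End S) (X ⟶ S)
  refine ⟨n, biproduct.lift b, ?_, Module.nontrivial_of_finrank_pos⟩
  let components (h : (⨁ fun _ : Fin n => S) ⟶ S) : Fin n → End S :=
    fun k => End.of (biproduct.ι (fun _ => S) k ≫ h)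
  have h_components : Function.Bijective components :=
    ⟨fun h h' e => biproduct.hom_ext' _ _ fun k => congrFun e k,
      fun f => ⟨biproduct.desc f, funext fun k => biproduct.ι_desc _ k⟩⟩
  convert b.equivFun.symm.bijective.comp h_components using 1
  funext h
  calc biproduct.lift b ≫ h
      = ∑ k, b k ≫ biproduct.ι (fun _ => S) k ≫ h := by
        simp [biproduct.lift_eq, Preadditive.sum_comp]
    _ = b.equivFun.symm (components h) := (b.equivFun_symm_apply _).symm

lemma exists_mem_finiteSums_bijective_comp {ι : Type w} [Finite ι] {S : ι → D}
    (hS : ∀ i, IsBrick (S i)) (hort : ∀ i j, i ≠ j → Subsingleton (S i ⟶ S j)) (X : D)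
    [∀ i, IsNoetherian (End (S i)) (X ⟶ S i)] :
    ∃ A ∈ finiteSums S, ∃ g : X ⟶ A, (∀ i, Function.Bijective fun h : A ⟶ S i => g ≫ h) ∧
      ∀ Y, (∀ i, Nontrivial (X ⟶ S i) → Subsingleton (S i ⟶ Y)) → Subsingleton (A ⟶ Y) := by
  choose n g hg hn using fun i => (hS i).exists_bijective_comp X
  refine ⟨⨁ fun i => ⨁ fun _ : Fin (n i) => S i, ⟨Σ i, Fin (n i), inferInstance, Sigma.fst,
    ⟨biproductBiproductIso _ _⟩⟩, biproduct.lift g, fun i => ?_, fun Y hY => ⟨fun f f' => ?_⟩⟩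
  · have hπ := bijective_π_comp (fun i => ⨁ fun _ : Fin (n i) => S i) (Y := S i) i fun j hj =>
      ⟨fun f f' => biproduct.hom_ext' _ _ fun _ => (hort j i hj).elim _ _⟩
    refine (Function.Bijective.of_comp_iff _ hπ).1 ?_
    simpa only [Function.comp_def, biproduct.lift_π_assoc] using hg i
  · ext i k
    exact (hY i (hn i k.pos)).elim _ _

lemma exists_mem_finiteSums_bijective_comp_shift [HasShift D ℤ] {ι : Type w} [Finite ι] {S : ι → D}
    (hS : ∀ i, IsBrick (S i)) (hort : ∀ i j, i ≠ j → Subsingleton (S i ⟶ S j)) (X : D) (n : ℤ)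
    [∀ i, IsNoetherian (End (S i)) (X⟦-n⟧ ⟶ S i)] :
    ∃ A ∈ finiteSums S, ∃ g : X ⟶ A⟦n⟧,
      (∀ i, Function.Bijective fun h : A⟦n⟧ ⟶ (S i)⟦n⟧ => g ≫ h) ∧
      ∀ Y, (∀ i, Nontrivial (X ⟶ (S i)⟦n⟧) → Subsingleton (S i ⟶ Y)) → Subsingleton (A ⟶ Y) := by
  obtain ⟨A, hA, g, hg, hY⟩ := exists_mem_finiteSums_bijective_comp hS hort (X⟦-n⟧)
  let adj := (shiftEquiv' D (-n) n (neg_add_cancel n)).toAdjunction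
  refine ⟨A, hA, adj.homEquiv X A g, fun i => bijective_homEquiv_comp adj (hg i), fun Y h => ?_⟩
  exact hY Y fun i hi => h i (@Equiv.nontrivial _ _ (adj.homEquiv X (S i)).symm hi)

end Coevaluation

section Triangulated

lemma subsingleton_hom_of_subsingleton_obj₁_obj₃ {T : Triangle C} (hT : T ∈ distTriang C) {Y : C}
    (h₁ : Subsingleton (T.obj₁ ⟶ Y)) (h₃ : Subsingleton (T.obj₃ ⟶ Y)) :
    Subsingleton (T.obj₂ ⟶ Y) := by
  refine subsingleton_of_forall_eq 0 fun f => ?_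
  obtain ⟨g, rfl⟩ := Triangle.yoneda_exact₂ T hT f (Subsingleton.elim _ _)
  rw [Subsingleton.elim g 0, comp_zero]

lemma subsingleton_obj₁_hom_of_mor₁_comp_eq_zero {T : Triangle C} (hT : T ∈ distTriang C)
    {Y : C} {m n : ℤ} (hmn : m + 1 = n) (h₂ : ∀ v : T.obj₂ ⟶ Y⟦m⟧, T.mor₁ ≫ v = 0)
    (h₃ : ∀ w : T.obj₃ ⟶ Y⟦n⟧, T.mor₂ ≫ w = 0 → w = 0) :
    Subsingleton (T.obj₁ ⟶ Y⟦m⟧) := by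
  refine subsingleton_of_forall_eq 0 fun f => ?_
  have hf : T.mor₃ ≫ f⟦(1 : ℤ)⟧' = 0 := by
    let e := (shiftFunctorAdd' C m 1 n hmn).app Y
    rw [← cancel_mono e.inv, zero_comp]
    exact h₃ _ (by simp [comp_distTriang_mor_zero₂₃_assoc T hT])
  obtain ⟨g, hg⟩ : ∃ g : T.obj₂⟦(1 : ℤ)⟧ ⟶ Y⟦m⟧⟦(1 : ℤ)⟧, f⟦(1 : ℤ)⟧' = (-T.mor₁⟦(1 : ℤ)⟧') ≫ g :=
    Triangle.yoneda_exact₃ T.rotate (rot_of_distTriang T hT) _ hf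
  obtain ⟨v, rfl⟩ := (shiftFunctor C (1 : ℤ)).map_surjective g
  refine (shiftFunctor C (1 : ℤ)).map_injective ?_
  calc f⟦(1 : ℤ)⟧'
      = (T.mor₁ ≫ (-v))⟦(1 : ℤ)⟧' := by simp [hg]
    _ = (0 : T.obj₁ ⟶ Y⟦m⟧)⟦(1 : ℤ)⟧' := by rw [h₂]

lemma isTriangulatedSub_setOf_forall_shift (P : ObjectProperty C) [P.ContainsZero]
    [P.IsClosedUnderIsomorphisms] [P.IsTriangulatedClosed₂] :
    IsTriangulatedSub {X : C | ∀ n : ℤ, P (X⟦n⟧)} where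
  zero _ hX n := P.prop_of_isZero ((shiftFunctor C n).map_isZero hX)
  isoClosed e h n := P.prop_of_iso ((shiftFunctor C n).mapIso e) (h n)
  shift k _ h n := P.prop_of_iso ((shiftFunctorAdd' C k n _ rfl).app _) (h (k + n))
  ext₂ T hT h₁ h₃ n :=
    P.ext_of_isTriangulatedClosed₂ _ (Triangle.shift_distinguished T hT n) (h₁ n) (h₃ n)

end Triangulated

section NoetherianHom

variable {D : Type*} [Category* D] [Preadditive D]

/-- Precomposition with a morphism, as a linear map over the endomorphisms of the target. -/
def precompLinearMap {X Y : D} (φ : X ⟶ Y) (S : D) : (Y ⟶ S) →ₗ[End S] (X ⟶ S) where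
  toFun f := φ ≫ f
  map_add' f g := Preadditive.comp_add _ _ _ φ f g
  map_smul' r f := (assoc φ f r).symm

/-- The objects `X` for which `X ⟶ S` is a Noetherian module over the endomorphism ring of `S`. -/
def noetherianHom (S : D) : ObjectProperty D := fun X => IsNoetherian (End S) (X ⟶ S)

lemma noetherianHom_of_subsingleton {X S : D} (h : Subsingleton (X ⟶ S)) : noetherianHom S X :=
  have := @Finite.of_subsingleton (X ⟶ S) h
  isNoetherian_of_finite _ _

lemma noetherianHom_of_finite (K : Type*) [Field K] [Linear K D] (X S : D)
    [Module.Finite K (X ⟶ S)] : noetherianHom S X :=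
  have : IsScalarTower K (End S) (X ⟶ S) := ⟨fun a r f => Linear.comp_smul _ _ _ f a r⟩
  isNoetherian_of_tower K inferInstance

lemma IsBrick.noetherianHom_self {S : D} (hS : IsBrick S) : noetherianHom S S :=
  let := hS.divisionRing
  inferInstanceAs (IsNoetherian (End S) (End S))

instance (S : D) : (noetherianHom S).IsClosedUnderIsomorphisms where
  of_iso {X _} e hX :=
    have : IsNoetherian (End S) (X ⟶ S) := hX
    isNoetherian_of_injective (precompLinearMap e.hom S) fun _ _ h => (cancel_epi e.hom).1 h

instance [HasZeroObject D] (S : D) : (noetherianHom S).ContainsZero where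
  exists_zero :=
    ⟨_, isZero_zero D, noetherianHom_of_subsingleton ⟨(isZero_zero D).eq_of_src⟩⟩

instance (S : C) : (noetherianHom S).IsTriangulatedClosed₂ := .mk' fun T hT h₁ h₃ => by
  have : IsNoetherian (End S) (T.obj₁ ⟶ S) := h₁
  have : IsNoetherian (End S) (T.obj₃ ⟶ S) := h₃
  refine isNoetherian_of_range_eq_ker (precompLinearMap T.mor₂ S) (precompLinearMap T.mor₁ S) ?_
  ext f
  constructor
  · rintro ⟨g, rfl⟩
    exact (comp_distTriang_mor_zero₁₂_assoc T hT g).trans zero_comp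
  · intro hf
    obtain ⟨g, hg⟩ := Triangle.yoneda_exact₂ T hT f hf
    exact ⟨g, hg.symm⟩

end NoetherianHom

section Filtration

/-- A distinguished triangle `X ⟶ Y ⟶ A⟦k⟧ ⟶` with `A ∈ H`, seen as a filtration step from `X` to
`Y` whose factor has degree `k`. -/
def IsFiltrationStep (H : Set C) (X Y : C) (k : ℤ) : Prop :=
  ∃ A ∈ H, ∃ (f : X ⟶ Y) (g : Y ⟶ A⟦k⟧) (h : A⟦k⟧ ⟶ X⟦(1 : ℤ)⟧), Triangle.mk f g h ∈ distTriang C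

/-- The existence of a filtration of `E` as in `IsHeart`, all of whose factors have degree at
least `l`. -/
def HasFiltrationGE (H : Set C) (E : C) (l : ℤ) : Prop :=
  ∃ (m : ℕ) (obj : Fin (m + 1) → C) (k : Fin m → ℤ), IsZero (obj 0) ∧ obj (Fin.last m) = E ∧
    StrictAnti k ∧ (∀ i, l ≤ k i) ∧ ∀ i, IsFiltrationStep H (obj i.castSucc) (obj i.succ) (k i)

variable {H : Set C} {X Y E : C} {l : ℤ}

lemma HasFiltrationGE.of_isZero (hE : IsZero E) : HasFiltrationGE H E l :=
  ⟨0, fun _ => E, Fin.elim0, hE, rfl, fun i => i.elim0, fun i => i.elim0, fun i => i.elim0⟩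

lemma HasFiltrationGE.append (hX : HasFiltrationGE H X (l + 1)) (hXY : IsFiltrationStep H X Y l) :
    HasFiltrationGE H Y l := by
  obtain ⟨m, obj, k, h_zero, rfl, hk, hl, h_step⟩ := hX
  refine ⟨m + 1, Fin.snoc (α := fun _ => C) obj Y, Fin.snoc (α := fun _ => ℤ) k l, ?_,
    Fin.snoc_last _ _, fun i j => ?_, fun i => ?_, fun i => ?_⟩
  · rwa [← Fin.castSucc_zero, Fin.snoc_castSucc]
  · intro hij
    cases i using Fin.lastCases with
    | last => exact absurd hij (Fin.le_last j).not_gt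
    | cast i =>
      cases j using Fin.lastCases with
      | last => simpa using Int.lt_of_add_one_le (hl i)
      | cast j => simpa using hk (Fin.castSucc_lt_castSucc_iff.1 hij)
  · cases i using Fin.lastCases with
    | last => simp
    | cast i => simpa using (Int.lt_of_add_one_le (hl i)).le
  · cases i using Fin.lastCases with
    | last => simpa using hXY
    | cast i => simpa [← Fin.castSucc_succ] using h_step i

end Filtration

/-- A family of bricks that generates `C`, has no nonzero morphisms of degree at most `1` between
its members other than endomorphisms, and has morphisms of degree `n` from `S i` to `S j` only for
`n ≤ u j - u i`: a simple-minded collection in the sense of Koenig and Yang, without first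
extensions and with `u` as weight function. Finiteness is expressed over the endomorphism
rings since `C` is not supposed to be linear over a field. -/
structure IsSemisimpleCollection {ι : Type*} (S : ι → C) (u : ι → ℤ) : Prop where
  isBrick : ∀ i, IsBrick (S i)
  subsingleton_of_le_one : ∀ i j, ∀ n ≤ (1 : ℤ), i ≠ j ∨ n ≠ 0 → Subsingleton (S i ⟶ (S j)⟦n⟧)
  subsingleton_of_lt : ∀ i j n, u j - u i < n → Subsingleton (S i ⟶ (S j)⟦n⟧)
  noetherian : ∀ i j, i ≠ j → ∀ n : ℤ, noetherianHom (S j) ((S i)⟦n⟧)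
  generates : ∀ T : Set C, IsTriangulatedSub T → (∀ i, S i ∈ T) → ∀ X, X ∈ T

/-- Nonzero morphisms from `E` to `(S i)⟦n⟧` exist only for `a ≤ n ≤ u i + b`. -/
def HomsConcentrated {ι : Type*} (S : ι → C) (u : ι → ℤ) (a b : ℤ) (E : C) : Prop :=
  ∀ i n, n < a ∨ u i + b < n → Subsingleton (E ⟶ (S i)⟦n⟧)

namespace IsSemisimpleCollection

universe w

variable {ι : Type w} {S : ι → C} {u : ι → ℤ}

lemma subsingleton_hom (hS : IsSemisimpleCollection S u) {i j : ι} (hij : i ≠ j) :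
    Subsingleton (S i ⟶ S j) :=
  subsingleton_hom_shift_zero_iff.1 (hS.subsingleton_of_le_one i j 0 zero_le_one (.inl hij))

lemma noetherianHom_shift (hS : IsSemisimpleCollection S u) (i : ι) (X : C) :
    ∀ n : ℤ, noetherianHom (S i) (X⟦n⟧) := by
  refine hS.generates _ (isTriangulatedSub_setOf_forall_shift (noetherianHom (S i)))
    (fun j n => ?_) X
  rcases eq_or_ne j i with rfl | hij
  · rcases eq_or_ne n 0 with rfl | hn
    · exact (noetherianHom (S j)).prop_of_iso ((shiftFunctorZero C ℤ).app _).symm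
        (hS.isBrick j).noetherianHom_self
    · refine noetherianHom_of_subsingleton ((subsingleton_shift_hom_iff (add_neg_cancel n)).2 ?_)
      rcases le_or_gt (-n) 1 with h | h
      · exact hS.subsingleton_of_le_one j j _ h (.inr (neg_ne_zero.2 hn))
      · exact hS.subsingleton_of_lt j j _ (by omega)
  · exact hS.noetherian j i hij n

lemma isZero_of_subsingleton (hS : IsSemisimpleCollection S u) {E : C}
    (hE : ∀ i (n : ℤ), Subsingleton (E ⟶ (S i)⟦n⟧)) : IsZero E := by
  let P := (ObjectProperty.singleton E).rightOrthogonal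
  have hP (X : C) (n : ℤ) : P (X⟦n⟧) := by
    refine hS.generates _ (isTriangulatedSub_setOf_forall_shift P) (fun i m Z f hZ => ?_) X n
    obtain rfl := (ObjectProperty.singleton_iff E Z).1 hZ
    exact (hE i m).elim _ _
  have hE : P E := P.prop_of_iso ((shiftFunctorZero C ℤ).app E) (hP E 0)
  exact (IsZero.iff_id_eq_zero E).2 (hE _ ((ObjectProperty.singleton_iff E E).2 rfl))

lemma exists_homsConcentrated (hS : IsSemisimpleCollection S u) (E : C) :
    ∃ b, HomsConcentrated S u (-b) b E := by
  refine hS.generates {E | ∃ b, HomsConcentrated S u (-b) b E} ⟨?_, ?_, ?_, ?_⟩ (fun j => ?_) E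
  · exact fun X hX => ⟨0, fun i n _ => ⟨hX.eq_of_src⟩⟩
  · rintro X Y e ⟨b, hb⟩
    exact ⟨b, fun i n h => e.homFromEquiv.subsingleton_congr.1 (hb i n h)⟩
  · rintro k X ⟨b, hb⟩
    refine ⟨b + |k|, fun i n h => (subsingleton_shift_hom_shift_iff (sub_add_cancel n k)).2
      (hb i _ ?_)⟩
    grind
  · rintro T hT ⟨b, hb⟩ ⟨b', hb'⟩
    exact ⟨max b b', fun i n h => subsingleton_hom_of_subsingleton_obj₁_obj₃ hT
      (hb i n (by grind)) (hb' i n (by grind))⟩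
  · refine ⟨|u j|, fun i n h => ?_⟩
    rcases h with h | h
    · exact hS.subsingleton_of_le_one j i n (by grind) (.inr (by grind))
    · exact hS.subsingleton_of_lt j i n (by grind)

/-- No morphisms of degree `n` arise on the fiber of the universal morphism `E ⟶ A⟦n⟧`, because `A`
has no first extensions by the `S i`. -/
lemma exists_isFiltrationStep [Finite ι] (hS : IsSemisimpleCollection S u) {E : C} {n b : ℤ}
    (hE : HomsConcentrated S u n b E) :
    ∃ E', HomsConcentrated S u (n + 1) b E' ∧ IsFiltrationStep (finiteSums S) E' E n := by
  have (i : ι) : IsNoetherian (End (S i)) (E⟦-n⟧ ⟶ S i) := hS.noetherianHom_shift i E (-n)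
  obtain ⟨A, hA, g, hg, hAY⟩ := exists_mem_finiteSums_bijective_comp_shift hS.isBrick
    (fun _ _ => hS.subsingleton_hom) E n
  obtain ⟨E', f, h, hT⟩ := distinguished_cocone_triangle₁ g
  refine ⟨E', fun i m hm => ?_, A, hA, f, g, h, hT⟩
  refine subsingleton_obj₁_hom_of_mor₁_comp_eq_zero hT rfl (fun (v : E ⟶ (S i)⟦m⟧) => ?_)
    (fun (w : A⟦n⟧ ⟶ (S i)⟦m + 1⟧) => ?_)
  · obtain hmn | rfl := ne_or_eq m n
    · exact (congrArg (f ≫ ·) ((hE i m (by omega)).elim v 0)).trans comp_zero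
    · obtain ⟨w, rfl⟩ := (hg i).2 v
      exact (comp_distTriang_mor_zero₁₂_assoc _ hT w).trans zero_comp
  · obtain hmn | rfl := ne_or_eq (m + 1) n
    · have hA : Subsingleton (A ⟶ (S i)⟦m + 1 - n⟧) := hAY _ fun j hj => by
        have hj : n ≤ u j + b := not_lt.1 fun h => not_subsingleton _ (hE j n (.inr h))
        rcases le_or_gt (m + 1 - n) 1 with h | h
        · exact hS.subsingleton_of_le_one j i _ h (.inr (sub_ne_zero.2 hmn))
        · exact hS.subsingleton_of_lt j i _ (by omega)
      exact fun _ => ((subsingleton_shift_hom_shift_iff (sub_add_cancel _ n)).2 hA).elim w 0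
    · exact fun hw => (hg i).1 (hw.trans comp_zero.symm)

lemma hasFiltrationGE_finiteSums [Finite ι] (hS : IsSemisimpleCollection S u) {b : ℤ} (d : ℕ) :
    ∀ {E : C} {n : ℤ}, (∀ i, u i + b < n + d) → HomsConcentrated S u n b E →
      HasFiltrationGE (finiteSums S) E n := by
  induction d with
  | zero =>
    refine fun hd hE => .of_isZero (hS.isZero_of_subsingleton fun i m => hE i m ?_)
    have := hd i
    omega
  | succ d ih =>
    intro E n hd hE
    obtain ⟨E', hE', h_step⟩ := hS.exists_isFiltrationStep hE
    exact (ih (fun i => by have := hd i; push_cast at this; omega) hE').append h_step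

lemma isHeart_finiteSums [Finite ι] (hS : IsSemisimpleCollection S u) : IsHeart (finiteSums S) where
  isoClosed := mem_finiteSums_of_iso
  zero _ := mem_finiteSums_of_isZero
  sums := biprod_mem_finiteSums
  neg_vanish A hA B hB n hn f := by
    have h_shift (Y : C) : Subsingleton (A⟦-n⟧ ⟶ Y) ↔ Subsingleton (A ⟶ Y⟦n⟧) :=
      subsingleton_shift_hom_iff (neg_add_cancel n)
    have : Subsingleton (A ⟶ B⟦n⟧) :=
      (h_shift B).1 <| subsingleton_hom_of_mem_finiteSums_right hB fun j => (h_shift _).2 <|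
        subsingleton_hom_of_mem_finiteSums_left hA fun i =>
          hS.subsingleton_of_le_one i j n (by omega) (.inr hn.ne)
    exact Subsingleton.elim f 0
  filtration E := by
    obtain ⟨b, hb⟩ := hS.exists_homsConcentrated E
    obtain ⟨M, hM⟩ := Finite.exists_le u
    obtain ⟨m, obj, k, h_zero, h_last, hk, -, h_step⟩ := hS.hasFiltrationGE_finiteSums
      (M + 2 * b + 1).toNat (fun i => by have := hM i; omega) hb
    choose A hA f g h hT using h_step
    exact ⟨m, obj, f, k, h_zero, h_last, fun _ _ => @hk _ _, fun i => ⟨A i, hA i, g i, h i, hT i⟩⟩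

end IsSemisimpleCollection

lemma isSemisimpleCollection_pairFunction_shift {X Y : C} (hX : IsBrick X) (hY : IsBrick Y)
    (hXX : ∀ n : ℤ, n ≠ 0 → Subsingleton (X ⟶ X⟦n⟧))
    (hYY : ∀ n : ℤ, n ≠ 0 → Subsingleton (Y ⟶ Y⟦n⟧))
    (hYX : ∀ n : ℤ, Subsingleton (Y ⟶ X⟦n⟧)) (hXY : ∀ n : ℤ, n ≠ 0 → Subsingleton (X ⟶ Y⟦n⟧))
    (hfin : noetherianHom Y X)
    (hgen : ∀ T : Set C, IsTriangulatedSub T → X ∈ T → Y ∈ T → ∀ Z, Z ∈ T) {p : ℤ} (hp : 2 ≤ p) :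
    IsSemisimpleCollection (pairFunction (X⟦p⟧) Y) (pairFunction 0 p) := by
  have h_left_left (n : ℤ) (hn : n ≠ 0) : Subsingleton (X⟦p⟧ ⟶ X⟦p⟧⟦n⟧) :=
    (subsingleton_hom_shift_shift_iff rfl).2 <|
      (subsingleton_shift_hom_shift_iff (add_comm n p)).2 (hXX n hn)
  have h_left_right (n : ℤ) (hn : n ≠ p) : Subsingleton (X⟦p⟧ ⟶ Y⟦n⟧) :=
    (subsingleton_shift_hom_shift_iff (sub_add_cancel n p)).2 (hXY _ (sub_ne_zero.2 hn))
  have h_right_left (n : ℤ) : Subsingleton (Y ⟶ X⟦p⟧⟦n⟧) :=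
    (subsingleton_hom_shift_shift_iff rfl).2 (hYX _)
  constructor
  · rintro (_ | _)
    exacts [hX.map (shiftFunctor C p), hY]
  · rintro (_ | _) (_ | _) n hn h
    exacts [h_left_left n (by simpa using h), h_left_right n (by omega), h_right_left n,
      hYY n (by simpa using h)]
  · rintro (_ | _) (_ | _) n h
    exacts [h_left_left n (by simpa using h.ne'), h_left_right n (by simpa using h.ne'),
      h_right_left n, hYY n (by simpa using h.ne')]
  · rintro (_ | _) (_ | _) hij n
    · exact absurd rfl hij
    · rcases eq_or_ne (-n) p with rfl | hn
      · exact (noetherianHom Y).prop_of_iso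
          ((shiftFunctorCompIsoId C (-n) n (neg_add_cancel n)).app X).symm hfin
      · exact noetherianHom_of_subsingleton
          ((subsingleton_shift_hom_iff (add_neg_cancel n)).2 (h_left_right _ hn))
    · exact noetherianHom_of_subsingleton
        ((subsingleton_shift_hom_iff (add_neg_cancel n)).2 (h_right_left _))
    · exact absurd rfl hij
  · intro T hT h
    refine hgen T hT ?_ (h .right)
    exact hT.isoClosed ((shiftFunctorCompIsoId C p (-p) (add_neg_cancel p)).app X)
      (hT.shift (-p) _ (h .left))

theorem projectiveLine_tilted_heart_general {K : Type*} [Field K] [Linear K C]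
    (O O1 : C) (hO : IsExceptional K O) (hO1 : IsExceptional K O1)
    (hseq : ∀ n : ℤ, ∀ f : O1 ⟶ O⟦n⟧, f = 0)
    (hstrong : ∀ n : ℤ, n ≠ 0 → ∀ f : O ⟶ O1⟦n⟧, f = 0)
    (hfull : ∀ S : Set C, IsTriangulatedSub S → O ∈ S → O1 ∈ S → ∀ X : C, X ∈ S)
    [Module.Finite K (O ⟶ O1)] {p : ℤ} (hp : 2 ≤ p) :
    IsHeart (finiteSums (pairFunction (O⟦p⟧) O1)) :=
  (isSemisimpleCollection_pairFunction_shift hO.isBrick hO1.isBrick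
    (fun n hn => subsingleton_of_forall_eq 0 (hO.2.2 n hn))
    (fun n hn => subsingleton_of_forall_eq 0 (hO1.2.2 n hn))
    (fun n => subsingleton_of_forall_eq 0 (hseq n))
    (fun n hn => subsingleton_of_forall_eq 0 (hstrong n hn)) (noetherianHom_of_finite K O O1) hfull
    hp).isHeart_finiteSums

lemma tiltedSet_eq_finiteSums (O O1 : C) :
    tiltedSet O O1 = finiteSums (pairFunction (O⟦(2 : ℤ)⟧) O1) :=
  Set.ext fun _ => mem_finiteSums_pairFunction_iff.symm

/-- in `D^b(P¹_K)` — here axiomatized, following the paper, as a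
`K`-linear triangulated category with a full strong exceptional pair `⟨O, O(1)⟩` with
`dim_K Hom(O, O(1)) = 2` (this characterizes `D^b(P¹_K)` by the paper's Corollary 2.14) —
the full subcategory `A = { O^{⊕a}[2] ⊕ O(1)^{⊕b} }` is the heart of a bounded
t-structure. -/
theorem projectiveLine_tilted_heart {K : Type*} [Field K] [Linear K C]
    [HasFiniteBiproducts C] [HasBinaryBiproducts C]
    (O O1 : C)
    (hO : IsExceptional K O) (hO1 : IsExceptional K O1)
    (hseq : ∀ n : ℤ, ∀ f : O1 ⟶ O⟦n⟧, f = 0)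
    (hstrong : ∀ n : ℤ, n ≠ 0 → ∀ f : O ⟶ O1⟦n⟧, f = 0)
    (hfull : ∀ S : Set C, IsTriangulatedSub S → O ∈ S → O1 ∈ S → ∀ X : C, X ∈ S)
    (hdim : Module.finrank K (O ⟶ O1) = 2) :
    IsHeart (tiltedSet O O1) := by
  have : Module.Finite K (O ⟶ O1) := Module.finite_of_finrank_pos (by omega)
  exact tiltedSet_eq_finiteSums O O1 ▸
    projectiveLine_tilted_heart_general O O1 hO hO1 hseq hstrong hfull le_rfl

end Paper
end
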